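/- arXiv:1301.0727 — 3 statements merged into one kernel-verified Lean document; each statement's English description precedes it below -/
import Mathlib

section
/- Fix a ∈ ℝ. Let τ* ∈ ℝ and let (Φ, W, Ψ, θ) be a solution of system (D) defined on (τ*, 0] with Φ(τ) > 0 and θ(τ) ∈ (−π/2, π/2) for all τ ∈ (τ*, 0], and suppose Φ(τ) → 0 as τ → τ*⁺. Set x = (Φ(0), W(0), Ψ(0), θ(0)). Then there exists δ > 0 such that for every y = (Φ̃₀, W̃₀, Ψ̃₀, θ̃₀) ∈ ℝ⁴ with |y − x| < δ, Φ̃₀ > 0 and θ̃₀ ∈ (−π/2, π/2), there exist τ̃* ∈ ℝ with τ̃* < 0 and a solution (Φ̃, W̃, Ψ̃, θ̃) of system (D) on (τ̃*, 0] with (Φ̃, W̃, Ψ̃, θ̃)(0) = y, Φ̃ > 0 on (τ̃*, 0], and Φ̃(τ) → 0 as τ → τ̃*⁺. -/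
open Filter Set

/-- The right-hand side of the `Ψ` equation in system (D). -/
noncomputable def dPsi (a Φ W Ψ θ : ℝ) : ℝ :=
  1 / Φ ^ 3 - 1 - (a - 1) * Real.cos θ ^ 2 -
    (((16 / 3) * Real.sin θ - (224 / 27) * Real.sin θ ^ 3) * Real.cos θ ^ ((17 : ℝ) / 3) * Φ
      + ((208 / 81) * Real.sin θ ^ 2 - 10 / 9) * Real.cos θ ^ ((34 : ℝ) / 9) * W
      + (2 / 3) * Real.sin θ * Real.cos θ ^ ((17 : ℝ) / 9) * Ψ)

/-- `(Φ, W, Ψ, θ)` is a solution of system (D) on the set `s`. -/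
noncomputable def SolDOn (a : ℝ) (s : Set ℝ) (Φ W Ψ θ : ℝ → ℝ) : Prop :=
  ∀ τ ∈ s,
    HasDerivWithinAt Φ (W τ) s τ ∧
    HasDerivWithinAt W (Ψ τ) s τ ∧
    HasDerivWithinAt Ψ (dPsi a (Φ τ) (W τ) (Ψ τ) (θ τ)) s τ ∧
    HasDerivWithinAt θ (Real.cos (θ τ) ^ ((26 : ℝ) / 9)) s τ

section ODEpart

variable {E : Type*} [NormedAddCommGroup E] [NormedSpace ℝ E]

/-- solutions of an autonomous ODE staying in `U` -/
def IsSolU (F : E → E) (U : Set E) (Z : ℝ → E) (S : Set ℝ) : Prop :=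
  ∀ s ∈ S, HasDerivWithinAt Z (F (Z s)) S s ∧ Z s ∈ U

lemma IsSolU.mono {F : E → E} {U : Set E} {Z : ℝ → E} {S S' : Set ℝ}
    (h : IsSolU F U Z S) (hs : S' ⊆ S) : IsSolU F U Z S' :=
  fun s h' => ⟨(h s (hs h')).1.mono hs, (h s (hs h')).2⟩

lemma IsSolU.continuousOn {F : E → E} {U : Set E} {Z : ℝ → E} {S : Set ℝ}
    (h : IsSolU F U Z S) : ContinuousOn Z S :=
  fun s h' => (h s h').1.continuousWithinAt

lemma trunc_field [FiniteDimensional ℝ E] {F : E → E} {U : Set E} (hU : IsOpen U)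
    (hF : ContDiffOn ℝ 1 F U) {C : Set E} (hC : IsCompact C) (hCU : C ⊆ U) :
    ∃ (G : E → E) (K L : NNReal), LipschitzWith K G ∧ (∀ z, ‖G z‖ ≤ L) ∧
      ∃ V, IsOpen V ∧ C ⊆ V ∧ V ⊆ U ∧ ∀ z ∈ V, G z = F z := by
  obtain ⟨C', hC', h1, h2⟩ := exists_compact_between hC hU hCU
  obtain ⟨χ, hχ1, hχ0, -⟩ := exists_contMDiffMap_one_nhds_of_subset_interior
    (I := modelWithCornersSelf ℝ E) (n := 1) hC.isClosed h1
  have hχ : ContDiff ℝ 1 χ := χ.contMDiff.contDiff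
  have hG0 : ∀ z ∉ C', χ z • F z = 0 := fun z hz => by rw [hχ0 z hz, zero_smul]
  have hGc : HasCompactSupport (fun z => χ z • F z) := HasCompactSupport.intro hC' hG0
  have hG : ContDiff ℝ 1 (fun z => χ z • F z) := by
    refine contDiff_of_contDiffOn_union_of_isOpen (s := U) (t := C'ᶜ) ?_ ?_ ?_ hU
      hC'.isClosed.isOpen_compl
    · exact hχ.contDiffOn.smul hF
    · exact (contDiffOn_const (c := (0:E))).congr (fun z hz => hG0 z hz)
    · ext z; simp only [mem_union, mem_compl_iff, mem_univ, iff_true]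
      by_cases hz : z ∈ C'
      · exact Or.inl (h2 hz)
      · exact Or.inr hz
  obtain ⟨K, hK⟩ := hG.lipschitzWith_of_hasCompactSupport hGc one_ne_zero
  obtain ⟨L, hL⟩ := hGc.exists_bound_of_continuous hG.continuous
  obtain ⟨V, hV, hCV, hV1⟩ := mem_nhdsSet_iff_exists.1 hχ1
  refine ⟨_, K, ⟨max L 0, le_max_right _ _⟩, hK, fun z => (hL z).trans (le_max_left _ _),
    V ∩ U, hV.inter hU, subset_inter hCV hCU, inter_subset_right, fun z hz => ?_⟩
  have : χ z = 1 := hV1 hz.1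
  simp [this]

lemma trunc_exists [CompleteSpace E] {G : E → E} {K L : NNReal} (hK : LipschitzWith K G)
    (hL : ∀ z, ‖G z‖ ≤ L) {T : ℝ} (hT : 0 ≤ T) (z₀ : E) :
    ∃ Z : ℝ → E, Z 0 = z₀ ∧ ∀ s ∈ Icc 0 T, HasDerivWithinAt Z (G (Z s)) (Icc 0 T) s := by
  have hpl : IsPicardLindelof (fun _ => G) (⟨0, le_rfl, hT⟩ : Icc (0:ℝ) T) z₀
      (L * ⟨T, hT⟩) 0 L K := by
    refine ⟨fun t _ => hK.lipschitzOnWith, fun x _ => continuousOn_const, fun t _ x _ => hL x, ?_⟩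
    simp only [sub_zero, max_eq_left hT, sub_self, NNReal.coe_zero]
    exact le_of_eq (NNReal.coe_mul L ⟨T, hT⟩).symm
  exact hpl.exists_eq_forall_mem_Icc_hasDerivWithinAt₀

lemma gron {G : E → E} {K : NNReal} (hK : LipschitzWith K G) {T : ℝ} {f g : ℝ → E}
    (hf : ∀ s ∈ Icc 0 T, HasDerivWithinAt f (G (f s)) (Icc 0 T) s)
    (hg : ∀ s ∈ Icc 0 T, HasDerivWithinAt g (G (g s)) (Icc 0 T) s) :
    ∀ s ∈ Icc 0 T, dist (f s) (g s) ≤ dist (f 0) (g 0) * Real.exp (K * s) := by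
  have key : ∀ {f : ℝ → E}, (∀ s ∈ Icc 0 T, HasDerivWithinAt f (G (f s)) (Icc 0 T) s) →
      ∀ t ∈ Ico 0 T, HasDerivWithinAt f (G (f t)) (Ici t) t := fun h t ht =>
    (h t ⟨ht.1, ht.2.le⟩).mono_of_mem_nhdsWithin (Icc_mem_nhdsGE_of_mem ht)
  have := dist_le_of_trajectories_ODE (v := fun _ => G) (fun _ => hK)
    (fun s hs => (hf s hs).continuousWithinAt) (key hf)
    (fun s hs => (hg s hs).continuousWithinAt) (key hg) le_rfl
  simpa using this

variable [FiniteDimensional ℝ E] {F : E → E} {U : Set E}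

lemma sol_unique (hU : IsOpen U) (hF : ContDiffOn ℝ 1 F U) {T : ℝ} {f g : ℝ → E}
    (hf : IsSolU F U f (Icc 0 T)) (hg : IsSolU F U g (Icc 0 T)) (h0 : f 0 = g 0) :
    EqOn f g (Icc 0 T) := by
  obtain ⟨G, K, L, hK, hL, V, hV, hCV, hVU, hGF⟩ := trunc_field hU hF
    (C := f '' Icc 0 T ∪ g '' Icc 0 T)
    ((isCompact_Icc.image_of_continuousOn hf.continuousOn).union
      (isCompact_Icc.image_of_continuousOn hg.continuousOn)) (by
      rintro _ (⟨s, hs, rfl⟩ | ⟨s, hs, rfl⟩)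
      · exact (hf s hs).2
      · exact (hg s hs).2)
  intro s hs
  have := gron hK (f := f) (g := g) (T := T)
    (fun s hs => by
      rw [hGF _ (hCV (Or.inl ⟨s, hs, rfl⟩))]; exact (hf s hs).1)
    (fun s hs => by
      rw [hGF _ (hCV (Or.inr ⟨s, hs, rfl⟩))]; exact (hg s hs).1) s hs
  rw [h0, dist_self, zero_mul] at this
  exact dist_le_zero.1 this

lemma sol_dep (hU : IsOpen U) (hF : ContDiffOn ℝ 1 F U) {T : ℝ} (hT : 0 ≤ T) {f : ℝ → E}
    (hf : IsSolU F U f (Icc 0 T)) {ε : ℝ} (hε : 0 < ε) :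
    ∃ δ > 0, ∀ y, dist y (f 0) < δ → ∃ Z : ℝ → E, Z 0 = y ∧ IsSolU F U Z (Icc 0 T) ∧
      ∀ s ∈ Icc 0 T, dist (Z s) (f s) < ε := by
  have hC : IsCompact (f '' Icc 0 T) := isCompact_Icc.image_of_continuousOn hf.continuousOn
  obtain ⟨G, K, L, hK, hL, V, hV, hCV, hVU, hGF⟩ := trunc_field hU hF hC (by
      rintro _ ⟨s, hs, rfl⟩
      exact (hf s hs).2)
  obtain ⟨ρ, hρ, hρV⟩ := hC.exists_thickening_subset_open hV hCV
  refine ⟨min ρ ε * Real.exp (-(K * T)), by positivity, fun y hy => ?_⟩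
  obtain ⟨Z, hZ0, hZ⟩ := trunc_exists hK hL hT y
  have hd : ∀ s ∈ Icc 0 T, dist (Z s) (f s) < min ρ ε := by
    intro s hs
    have := gron hK (f := Z) (g := f) hZ (fun s hs => by
      rw [hGF _ (hCV ⟨s, hs, rfl⟩)]; exact (hf s hs).1) s hs
    rw [hZ0] at this
    calc _ ≤ _ := this
      _ < min ρ ε * Real.exp (-(K * T)) * Real.exp (K * s) := by gcongr
      _ = min ρ ε * Real.exp (-(K * T) + K * s) := by rw [mul_assoc, Real.exp_add]
      _ ≤ min ρ ε * 1 := by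
        gcongr
        rw [Real.exp_le_one_iff]
        have : (K:ℝ) * s ≤ K * T := by gcongr; exact hs.2
        linarith
      _ = _ := mul_one _
  have hm : ∀ s ∈ Icc 0 T, Z s ∈ V := fun s hs => hρV
    (Metric.mem_thickening_iff.2 ⟨f s, ⟨s, hs, rfl⟩, (hd s hs).trans_le (min_le_left _ _)⟩)
  refine ⟨Z, hZ0, fun s hs => ⟨?_, hVU (hm s hs)⟩, fun s hs => (hd s hs).trans_le (min_le_right _ _)⟩
  rw [← hGF _ (hm s hs)]; exact hZ s hs

lemma sol_ext (hU : IsOpen U) (hF : ContDiffOn ℝ 1 F U) {T : ℝ} (hT : 0 ≤ T) {f : ℝ → E}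
    (hf : IsSolU F U f (Icc 0 T)) :
    ∃ T' > T, ∃ Z : ℝ → E, Z 0 = f 0 ∧ IsSolU F U Z (Icc 0 T') := by
  have hC : IsCompact (f '' Icc 0 T) := isCompact_Icc.image_of_continuousOn hf.continuousOn
  obtain ⟨G, K, L, hK, hL, V, hV, hCV, hVU, hGF⟩ := trunc_field hU hF hC (by
      rintro _ ⟨s, hs, rfl⟩
      exact (hf s hs).2)
  obtain ⟨Z, hZ0, hZ⟩ := trunc_exists hK hL (by linarith : 0 ≤ T + 1) (f 0)
  have hsub : Icc 0 T ⊆ Icc 0 (T+1) := Icc_subset_Icc le_rfl (by linarith)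
  have heq : ∀ s ∈ Icc 0 T, Z s = f s := by
    intro s hs
    have := gron hK (f := Z) (g := f) (T := T) (fun s hs => (hZ s (hsub hs)).mono hsub)
      (fun s hs => by rw [hGF _ (hCV ⟨s, hs, rfl⟩)]; exact (hf s hs).1) s hs
    rw [hZ0, dist_self, zero_mul] at this
    exact dist_le_zero.1 this
  have hTV : Z T ∈ V := by
    rw [heq T ⟨hT, le_rfl⟩]; exact hCV ⟨T, ⟨hT, le_rfl⟩, rfl⟩
  have hcont : ContinuousWithinAt Z (Icc 0 (T+1)) T :=
    (hZ T ⟨hT, by linarith⟩).continuousWithinAt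
  have hev := hcont (hV.mem_nhds hTV)
  obtain ⟨ε, hε, hball⟩ := Metric.mem_nhdsWithin_iff.1 hev
  have hm : ∀ s ∈ Icc 0 (T + min (ε/2) 1), Z s ∈ V := by
    intro s hs
    rcases le_or_gt s T with h | h
    · rw [heq s ⟨hs.1, h⟩]; exact hCV ⟨s, ⟨hs.1, h⟩, rfl⟩
    · have h1 := min_le_left (ε/2) 1
      have h2 := min_le_right (ε/2) 1
      have h3 := hs.2
      refine hball ⟨?_, hs.1, by linarith⟩
      rw [Metric.mem_ball, Real.dist_eq, abs_of_pos (by linarith)]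
      linarith
  have hsub2 : Icc 0 (T + min (ε/2) 1) ⊆ Icc 0 (T+1) :=
    Icc_subset_Icc le_rfl (by linarith [min_le_right (ε/2) 1])
  refine ⟨T + min (ε/2) 1, by have : 0 < min (ε/2) 1 := by positivity
                              linarith, Z, hZ0, fun s hs => ⟨?_, hVU (hm s hs)⟩⟩
  rw [← hGF _ (hm s hs)]; exact (hZ s (hsub2 hs)).mono hsub2

lemma sol_max (hU : IsOpen U) (hF : ContDiffOn ℝ 1 F U) {z₀ : E} (hz₀ : z₀ ∈ U) {T : ℝ}
    (hT : 0 ≤ T) (hno : ¬ ∃ Z : ℝ → E, Z 0 = z₀ ∧ IsSolU F U Z (Icc 0 T)) :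
    ∃ σ, 0 < σ ∧ σ ≤ T ∧ ∃ Z : ℝ → E, Z 0 = z₀ ∧ IsSolU F U Z (Ico 0 σ) ∧
      ∀ C, IsCompact C → C ⊆ U → ∃ s ∈ Ico 0 σ, Z s ∉ C := by
  set A : Set ℝ := {t | 0 ≤ t ∧ ∃ Z : ℝ → E, Z 0 = z₀ ∧ IsSolU F U Z (Icc 0 t)} with hA
  have hdown : ∀ t ∈ A, ∀ s, 0 ≤ s → s ≤ t → s ∈ A := by
    rintro t ⟨_, Z, h0, hZ⟩ s hs hst
    exact ⟨hs, Z, h0, hZ.mono (Icc_subset_Icc le_rfl hst)⟩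
  have hbd : ∀ t ∈ A, t ≤ T := by
    intro t ht
    by_contra! h
    exact hno (hdown t ht T hT h.le).2
  have hbdd : BddAbove A := ⟨T, hbd⟩
  have h0A : (0:ℝ) ∈ A := by
    refine ⟨le_rfl, fun _ => z₀, rfl, fun s hs => ⟨?_, hz₀⟩⟩
    rw [Icc_self] at hs ⊢
    rw [mem_singleton_iff.1 hs]
    rw [hasDerivWithinAt_iff_hasFDerivWithinAt]
    exact HasFDerivWithinAt.singleton
  set σ := sSup A with hσ
  have hlt : ∀ t ∈ A, t < σ := by
    rintro t ⟨ht, Z, h0, hZ⟩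
    obtain ⟨T', hT', Z', h0', hZ'⟩ := sol_ext hU hF ht hZ
    exact hT'.trans_le (le_csSup hbdd ⟨ht.trans hT'.le, Z', h0'.trans h0, hZ'⟩)
  have hmem : ∀ t, 0 ≤ t → t < σ → t ∈ A := by
    intro t ht hts
    obtain ⟨b, hb, htb⟩ := exists_lt_of_lt_csSup ⟨0, h0A⟩ hts
    exact hdown b hb t ht htb.le
  have hσ0 : 0 < σ := hlt 0 h0A
  have hex : ∀ t, ∃ Z : ℝ → E, 0 ≤ t → t < σ → (Z 0 = z₀ ∧ IsSolU F U Z (Icc 0 t)) := by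
    intro t
    by_cases h : 0 ≤ t ∧ t < σ
    · obtain ⟨-, Z, hZ⟩ := hmem t h.1 h.2
      exact ⟨Z, fun _ _ => hZ⟩
    · exact ⟨fun _ => 0, fun h1 h2 => absurd ⟨h1, h2⟩ h⟩
  choose Y hY using hex
  have hYeq : ∀ t t', 0 ≤ t → t ≤ t' → t' < σ → EqOn (Y t') (Y t) (Icc 0 t) := by
    intro t t' h0 h1 h2
    have a1 := hY t h0 (h1.trans_lt h2)
    have a2 := hY t' (h0.trans h1) h2
    exact sol_unique hU hF (a2.2.mono (Icc_subset_Icc le_rfl h1)) a1.2 (a2.1.trans a1.1.symm)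
  set Z : ℝ → E := fun s => Y ((s + σ)/2) s with hZdef
  have hZeq : ∀ t, 0 ≤ t → t < σ → EqOn Z (Y t) (Icc 0 t) := by
    intro t h0 h1 s hs
    have hs2 : s < σ := hs.2.trans_lt h1
    have e1 : Y ((s+σ)/2) s = Y s s :=
      hYeq s _ hs.1 (by linarith) (by linarith) ⟨hs.1, le_rfl⟩
    have e2 : Y t s = Y s s := hYeq s t hs.1 hs.2 h1 ⟨hs.1, le_rfl⟩
    simp only [hZdef, e1, e2]
  have hZ0 : Z 0 = z₀ := by
    rw [hZeq 0 le_rfl hσ0 ⟨le_rfl, le_rfl⟩]; exact (hY 0 le_rfl hσ0).1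
  have hZsol : IsSolU F U Z (Ico 0 σ) := by
    intro s hs
    have hs2 := hs.2
    have h0 : 0 ≤ (s+σ)/2 := by linarith [hs.1]
    have h1 : (s+σ)/2 < σ := by linarith
    have hsm : s ∈ Icc 0 ((s+σ)/2) := ⟨hs.1, by linarith⟩
    have hy := (hY _ h0 h1).2 s hsm
    have e := hZeq _ h0 h1
    have hmemn : Icc 0 ((s+σ)/2) ∈ nhdsWithin s (Ico 0 σ) := by
      have : Iio ((s+σ)/2) ∈ nhds s := Iio_mem_nhds (by linarith)
      filter_upwards [self_mem_nhdsWithin, mem_nhdsWithin_of_mem_nhds this] with x hx hx2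
      exact ⟨hx.1, le_of_lt hx2⟩
    refine ⟨?_, by rw [e hsm]; exact hy.2⟩
    have := hy.1.congr (fun x hx => e hx) (e hsm)
    rw [← e hsm] at this
    exact this.mono_of_mem_nhdsWithin hmemn
  refine ⟨σ, hσ0, csSup_le ⟨0, h0A⟩ hbd, Z, hZ0, hZsol, fun C hC hCU => ?_⟩
  by_contra! hall
  obtain ⟨G, K, L, hK, hL, V, hV, hCV, hVU, hGF⟩ := trunc_field hU hF hC hCU
  obtain ⟨X, hX0, hX⟩ := trunc_exists hK hL hσ0.le z₀
  have hXZ : ∀ s ∈ Ico 0 σ, X s = Z s := by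
    intro s hs
    have hs1 : Icc 0 s ⊆ Icc 0 σ := Icc_subset_Icc le_rfl hs.2.le
    have hs2 : Icc 0 s ⊆ Ico 0 σ := fun x hx => ⟨hx.1, hx.2.trans_lt hs.2⟩
    have := gron hK (f := X) (g := Z) (T := s) (fun x hx => (hX x (hs1 hx)).mono hs1)
      (fun x hx => by
        rw [hGF _ (hCV (hall x (hs2 hx)))]; exact (hZsol x (hs2 hx)).1.mono hs2) s ⟨hs.1, le_rfl⟩
    rw [hX0, hZ0, dist_self, zero_mul] at this
    exact dist_le_zero.1 this
  have hXσ : X σ ∈ C := by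
    have hc : ContinuousWithinAt X (Ico 0 σ) σ :=
      (hX σ ⟨hσ0.le, le_rfl⟩).continuousWithinAt.mono Ico_subset_Icc_self
    have hcl : σ ∈ closure (Ico 0 σ) := by
      rw [closure_Ico hσ0.ne]; exact ⟨hσ0.le, le_rfl⟩
    have := hc.mem_closure hcl (t := C) (fun s hs => by rw [hXZ s hs]; exact hall s hs)
    rwa [hC.isClosed.closure_eq] at this
  have hXC : ∀ s ∈ Icc 0 σ, X s ∈ C := by
    intro s hs
    rcases hs.2.lt_or_eq with h | h
    · rw [hXZ s ⟨hs.1, h⟩]; exact hall s ⟨hs.1, h⟩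
    · rw [h]; exact hXσ
  have : σ ∈ A := ⟨hσ0.le, X, hX0, fun s hs => ⟨by
    rw [← hGF _ (hCV (hXC s hs))]; exact hX s hs, hCU (hXC s hs)⟩⟩
  exact lt_irrefl _ (hlt σ this)

end ODEpart

/-- `(1+w²)^(1/9)` -/
noncomputable def rr (w : ℝ) : ℝ := (1 + w ^ 2) ^ ((1:ℝ)/9)

lemma rr_one_le (w : ℝ) : 1 ≤ rr w :=
  Real.one_le_rpow (by nlinarith [sq_nonneg w]) (by norm_num)

lemma rr_pos (w : ℝ) : 0 < rr w := lt_of_lt_of_le one_pos (rr_one_le w)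

lemma rr_pow (w : ℝ) : rr w ^ 9 = 1 + w ^ 2 := by
  rw [rr, ← Real.rpow_natCast, ← Real.rpow_mul (by positivity)]
  norm_num

lemma rr_neg (w : ℝ) : rr (-w) = rr w := by simp [rr]

lemma rr_mono {w W : ℝ} (h : |w| ≤ W) : rr w ≤ rr W := by
  unfold rr
  apply Real.rpow_le_rpow (by positivity) _ (by norm_num)
  have : w ^ 2 ≤ W ^ 2 := sq_le_sq' (by linarith [neg_abs_le w]) ((le_abs_self w).trans h)
  linarith

lemma rr_contDiff : ContDiff ℝ 1 rr := by
  unfold rr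
  apply ContDiff.rpow_const_of_ne
  · fun_prop
  · intro x; positivity

/-- time factor -/
noncomputable def kk (w : ℝ) : ℝ := (rr w ^ 4)⁻¹

lemma kk_pos (w : ℝ) : 0 < kk w := by have := rr_pos w; unfold kk; positivity

lemma kk_le_one (w : ℝ) : kk w ≤ 1 := by
  unfold kk; exact inv_le_one_of_one_le₀ (one_le_pow₀ (rr_one_le w))

lemma kk_anti {w W : ℝ} (h : |w| ≤ W) : kk W ≤ kk w := by
  have := rr_pos w
  have := rr_mono h
  unfold kk; gcongr

/-- the field of the desingularized (time reversed) system -/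
noncomputable def FF (a : ℝ) (z : ℝ × ℝ × ℝ × ℝ) : ℝ × ℝ × ℝ × ℝ :=
  (kk z.2.2.2 * z.2.1, kk z.2.2.2 * z.2.2.1, kk z.2.2.2 * (a + z.2.2.2 ^ 2 - 1 / z.1 ^ 3), kk z.2.2.2)

/-- half space -/
def UU : Set (ℝ × ℝ × ℝ × ℝ) := {z | 0 < z.1}

lemma UU_open : IsOpen UU := isOpen_lt continuous_const continuous_fst

lemma FF_contDiff (a : ℝ) : ContDiffOn ℝ 1 (FF a) UU := by
  have hk : ContDiff ℝ 1 (fun z : ℝ × ℝ × ℝ × ℝ => kk z.2.2.2) := by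
    unfold kk
    apply ContDiff.inv
    · exact (rr_contDiff.comp (by fun_prop)).pow 4
    · intro z; exact (pow_pos (rr_pos _) 4).ne'
  have hh : ContDiffOn ℝ 1 (fun z : ℝ × ℝ × ℝ × ℝ => 1 / z.1 ^ 3) UU := by
    apply ContDiffOn.div contDiffOn_const
    · fun_prop
    · intro z hz; exact (pow_pos hz 3).ne'
  unfold FF
  apply ContDiffOn.prodMk
  · exact (hk.mul (by fun_prop)).contDiffOn
  apply ContDiffOn.prodMk
  · exact (hk.mul (by fun_prop)).contDiffOn
  apply ContDiffOn.prodMk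
  · apply hk.contDiffOn.mul
    apply ContDiffOn.sub _ hh
    fun_prop
  · exact hk.contDiffOn

/-- scalar form -/
def Esys (a : ℝ) (S : Set ℝ) (h u v w : ℝ → ℝ) : Prop :=
  ∀ s ∈ S, HasDerivWithinAt h (kk (w s) * u s) S s ∧ HasDerivWithinAt u (kk (w s) * v s) S s ∧
    HasDerivWithinAt v (kk (w s) * (a + w s ^ 2 - 1 / h s ^ 3)) S s ∧
    HasDerivWithinAt w (kk (w s)) S s ∧ 0 < h s

lemma Esys_of_sol {a : ℝ} {S : Set ℝ} {Z : ℝ → ℝ × ℝ × ℝ × ℝ} (hZ : IsSolU (FF a) UU Z S) :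
    Esys a S (fun s => (Z s).1) (fun s => (Z s).2.1) (fun s => (Z s).2.2.1)
      (fun s => (Z s).2.2.2) := by
  intro s hs
  obtain ⟨h1, h2⟩ := hZ s hs
  refine ⟨?_, ?_, ?_, ?_, h2⟩
  · exact h1.fst
  · exact h1.snd.fst
  · exact h1.snd.snd.fst
  · exact h1.snd.snd.snd

lemma sol_of_Esys {a : ℝ} {S : Set ℝ} {h u v w : ℝ → ℝ} (H : Esys a S h u v w) :
    IsSolU (FF a) UU (fun s => (h s, u s, v s, w s)) S := by
  intro s hs
  obtain ⟨h1, h2, h3, h4, h5⟩ := H s hs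
  exact ⟨h1.prodMk (h2.prodMk (h3.prodMk h4)), h5⟩

lemma Esys.mono {a : ℝ} {S S' : Set ℝ} {h u v w : ℝ → ℝ} (H : Esys a S h u v w) (hs : S' ⊆ S) :
    Esys a S' h u v w := fun s h' =>
  let ⟨h1, h2, h3, h4, h5⟩ := H s (hs h')
  ⟨h1.mono hs, h2.mono hs, h3.mono hs, h4.mono hs, h5⟩

lemma anti_help {J : Set ℝ} (hJ : Convex ℝ J) {f f' : ℝ → ℝ}
    (hf : ∀ x ∈ J, HasDerivWithinAt f (f' x) J x) (h : ∀ x ∈ interior J, f' x ≤ 0) :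
    AntitoneOn f J :=
  antitoneOn_of_hasDerivWithinAt_nonpos hJ (fun x hx => (hf x hx).continuousWithinAt)
    (fun x hx => (hf x (interior_subset hx)).mono interior_subset) h

lemma bd_help {J : Set ℝ} (hJ : Convex ℝ J) {f f' : ℝ → ℝ} {C : ℝ}
    (hf : ∀ x ∈ J, HasDerivWithinAt f (f' x) J x) (h : ∀ x ∈ J, |f' x| ≤ C) {x y : ℝ}
    (hx : x ∈ J) (hy : y ∈ J) : |f y - f x| ≤ C * |y - x| :=
  hJ.norm_image_sub_le_of_norm_hasDerivWithin_le hf h hx hy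

lemma w_bound {a : ℝ} {S : Set ℝ} (hS : Convex ℝ S) {h u v w : ℝ → ℝ} (H : Esys a S h u v w)
    (h0 : 0 ∈ S) {s : ℝ} (hs : s ∈ S) (hs0 : 0 ≤ s) : |w s| ≤ |w 0| + s := by
  have := bd_help (C := 1) hS (fun x hx => (H x hx).2.2.2.1)
    (fun x hx => by rw [abs_of_pos (kk_pos _)]; exact kk_le_one _) h0 hs
  rw [sub_zero, one_mul, abs_of_nonneg hs0] at this
  have := abs_sub_abs_le_abs_sub (w s) (w 0)
  linarith

lemma cube_help {h η M b : ℝ} (h0 : 0 < h) (h1 : h ≤ η) (h2 : η ^ 3 * M ≤ 1) (hb : b ≤ M) :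
    b - 1 / h ^ 3 ≤ 0 := by
  have h3 : h ^ 3 ≤ η ^ 3 := by gcongr
  have hp : 0 < h ^ 3 := by positivity
  have : b ≤ 1 / h ^ 3 := by
    rw [le_div_iff₀ hp]
    rcases le_or_gt b 0 with h | h
    · nlinarith
    · nlinarith
  linarith

lemma trap {a s₀ t : ℝ} {h u v w : ℝ → ℝ} (H : Esys a (Icc s₀ t) h u v w)
    {M η κ : ℝ} (hκ : 0 < κ) (hM : ∀ s ∈ Icc s₀ t, a + w s ^ 2 ≤ M) (hη : η ^ 3 * M ≤ 1)
    (h0 : h s₀ < η) (u0 : u s₀ < -κ) (v0 : v s₀ < 0) :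
    ∀ s ∈ Icc s₀ t, h s < η ∧ u s < -κ ∧ v s < 0 := by
  by_contra! hcon
  obtain ⟨s1, hs1, hbad⟩ := hcon
  have hch : ContinuousOn h (Icc s₀ t) := fun s hs => (H s hs).1.continuousWithinAt
  have hcu : ContinuousOn u (Icc s₀ t) := fun s hs => (H s hs).2.1.continuousWithinAt
  have hcv : ContinuousOn v (Icc s₀ t) := fun s hs => (H s hs).2.2.1.continuousWithinAt
  set B : Set ℝ := (Icc s₀ t ∩ h ⁻¹' Ici η) ∪ (Icc s₀ t ∩ u ⁻¹' Ici (-κ)) ∪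
    (Icc s₀ t ∩ v ⁻¹' Ici 0) with hB
  have hBc : IsClosed B := ((hch.preimage_isClosed_of_isClosed isClosed_Icc isClosed_Ici).union
    (hcu.preimage_isClosed_of_isClosed isClosed_Icc isClosed_Ici)).union
    (hcv.preimage_isClosed_of_isClosed isClosed_Icc isClosed_Ici)
  have hBsub : B ⊆ Icc s₀ t := by
    rintro x ((hx | hx) | hx) <;> exact hx.1
  have hs1B : s1 ∈ B := by
    by_cases c1 : h s1 < η
    · by_cases c2 : u s1 < -κ
      · exact Or.inr ⟨hs1, hbad c1 c2⟩
      · exact Or.inl (Or.inr ⟨hs1, not_lt.1 c2⟩)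
    · exact Or.inl (Or.inl ⟨hs1, not_lt.1 c1⟩)
  have hbb : BddBelow B := ⟨s₀, fun x hx => (hBsub hx).1⟩
  have ht1 : sInf B ∈ B := hBc.csInf_mem ⟨s1, hs1B⟩ hbb
  set t1 := sInf B with ht1d
  have hgood : ∀ x, s₀ ≤ x → x < t1 → h x < η ∧ u x < -κ ∧ v x < 0 := by
    intro x hx0 hx1
    have hxB : x ∉ B := notMem_of_lt_csInf hx1 hbb
    have hxI : x ∈ Icc s₀ t := ⟨hx0, hx1.le.trans (hBsub ht1).2⟩
    refine ⟨?_, ?_, ?_⟩ <;> by_contra! hc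
    · exact hxB (Or.inl (Or.inl ⟨hxI, hc⟩))
    · exact hxB (Or.inl (Or.inr ⟨hxI, hc⟩))
    · exact hxB (Or.inr ⟨hxI, hc⟩)
  have h01 : s₀ ≤ t1 := (hBsub ht1).1
  have hsub : Icc s₀ t1 ⊆ Icc s₀ t := Icc_subset_Icc le_rfl (hBsub ht1).2
  have H' := H.mono hsub
  have hint : ∀ x ∈ interior (Icc s₀ t1), x ∈ Icc s₀ t1 ∧ h x < η ∧ u x < -κ ∧ v x < 0 := by
    intro x hx
    rw [interior_Icc] at hx
    exact ⟨⟨hx.1.le, hx.2.le⟩, hgood x hx.1.le hx.2⟩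
  have m0 : s₀ ∈ Icc s₀ t1 := ⟨le_rfl, h01⟩
  have m1 : t1 ∈ Icc s₀ t1 := ⟨h01, le_rfl⟩
  have ah := anti_help (convex_Icc s₀ t1) (fun x hx => (H' x hx).1) (fun x hx => by
    have := hint x hx
    exact mul_nonpos_of_nonneg_of_nonpos (kk_pos _).le (by linarith [this.2.2.1])) m0 m1 h01
  have au := anti_help (convex_Icc s₀ t1) (fun x hx => (H' x hx).2.1) (fun x hx => by
    have := hint x hx
    exact mul_nonpos_of_nonneg_of_nonpos (kk_pos _).le (by linarith [this.2.2.2])) m0 m1 h01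
  have av := anti_help (convex_Icc s₀ t1) (fun x hx => (H' x hx).2.2.1) (fun x hx => by
    have := hint x hx
    exact mul_nonpos_of_nonneg_of_nonpos (kk_pos _).le
      (cube_help (H' x this.1).2.2.2.2 this.2.1.le hη (hM x (hsub this.1)))) m0 m1 h01
  rcases ht1 with (hx | hx) | hx
  · have : η ≤ h t1 := hx.2
    linarith
  · have : -κ ≤ u t1 := hx.2
    linarith
  · have : 0 ≤ v t1 := hx.2
    linarith

lemma ref_region {a S : ℝ} (hS : 0 < S) {h u v w : ℝ → ℝ} (H : Esys a (Ico 0 S) h u v w)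
    (hlim : Tendsto h (nhdsWithin S (Iio S)) (nhds 0)) {M k₀ : ℝ} (hM0 : 0 < M) (hk₀ : 0 < k₀)
    (hM : ∀ s ∈ Ico 0 S, a + w s ^ 2 ≤ M) (hk : ∀ s ∈ Ico 0 S, k₀ ≤ kk (w s)) :
    ∃ κ > 0, ∀ η > 0, ∃ s₀ ∈ Ico 0 S, h s₀ < η ∧ u s₀ < -κ ∧ v s₀ < 0 := by
  have hsmall : ∀ η > 0, ∃ s1 ∈ Ico 0 S, ∀ s ∈ Ico s1 S, h s < η := by
    intro η hη
    have := hlim (Iio_mem_nhds hη)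
    obtain ⟨l, hl, hl2⟩ := (mem_nhdsLT_iff_exists_Ioo_subset' hS).1 this
    have hlS : l < S := hl
    refine ⟨max 0 ((l + S)/2), ⟨le_max_left _ _, max_lt hS (by linarith)⟩, fun s hs => hl2 ⟨?_, hs.2⟩⟩
    have := (le_max_right 0 ((l + S)/2)).trans hs.1
    linarith
  have hη1 : (min 1 (1/M)) ^ 3 * M ≤ 1 := by
    have p : 0 < min 1 (1/M) := by positivity
    have p1 := min_le_left 1 (1/M)
    have p2 := min_le_right 1 (1/M)
    calc (min 1 (1/M)) ^ 3 * M ≤ (min 1 (1/M)) * M := by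
          gcongr
          exact pow_le_of_le_one p.le p1 (by norm_num)
      _ ≤ 1/M * M := by gcongr
      _ = 1 := by field_simp
  obtain ⟨s1, hs1, hs1h⟩ := hsmall (min 1 (1/M)) (by positivity)
  have sub1 : Ico s1 S ⊆ Ico 0 S := Ico_subset_Ico hs1.1 le_rfl
  have H1 := H.mono sub1
  have m1 : s1 ∈ Ico s1 S := ⟨le_rfl, hs1.2⟩
  have av : AntitoneOn v (Ico s1 S) := anti_help (convex_Ico s1 S) (fun x hx => (H1 x hx).2.2.1)
    (fun x hx => by
      have hx' := interior_subset hx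
      exact mul_nonpos_of_nonneg_of_nonpos (kk_pos _).le
        (cube_help (H1 x hx').2.2.2.2 (hs1h x hx').le hη1 (hM x (sub1 hx'))))
  have hv : ∃ s2 ∈ Ico s1 S, v s2 < 0 := by
    by_contra! hv0
    set V := v s1
    have hV : 0 ≤ V := hv0 s1 m1
    have hvV : ∀ s ∈ Ico s1 S, v s ≤ V := fun s hs => av m1 hs hs.1
    have kv : ∀ s ∈ Ico s1 S, |kk (w s) * v s| ≤ V := by
      intro s hs
      rw [abs_of_nonneg (mul_nonneg (kk_pos _).le (hv0 s hs))]
      calc _ ≤ 1 * v s := by gcongr; exact hv0 s hs; exact kk_le_one _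
        _ ≤ V := by rw [one_mul]; exact hvV s hs
    set U := |u s1| + V * (S - s1) + 1 with hU
    have hVS : 0 ≤ V * (S - s1) := mul_nonneg hV (by linarith [hs1.2])
    have hUpos : 0 < U := by positivity
    have huU : ∀ s ∈ Ico s1 S, |u s| ≤ U := by
      intro s hs
      have b := bd_help (convex_Ico s1 S) (fun x hx => (H1 x hx).2.1) kv m1 hs
      rw [abs_of_nonneg (by linarith [hs.1] : 0 ≤ s - s1)] at b
      have c := abs_sub_abs_le_abs_sub (u s) (u s1)
      have d : V * (s - s1) ≤ V * (S - s1) := by gcongr; exact hs.2.le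
      linarith
    have khU : ∀ s ∈ Ico s1 S, |kk (w s) * u s| ≤ U := by
      intro s hs
      rw [abs_mul, abs_of_pos (kk_pos _)]
      calc _ ≤ 1 * |u s| := by gcongr; exact kk_le_one _
        _ ≤ U := by rw [one_mul]; exact huU s hs
    have hlin : ∀ s ∈ Ico s1 S, h s ≤ U * (S - s) := by
      intro s hs
      have ev : ∀ᶠ x in nhdsWithin S (Iio S), h s - h x ≤ U * (S - s) := by
        have : Ioo s S ∈ nhdsWithin S (Iio S) := Ioo_mem_nhdsLT hs.2
        filter_upwards [this] with x hx
        have hxI : x ∈ Ico s1 S := ⟨hs.1.trans hx.1.le, hx.2⟩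
        have b := bd_help (convex_Ico s1 S) (fun x hx => (H1 x hx).1) khU hs hxI
        rw [abs_of_pos (by linarith [hx.1] : 0 < x - s)] at b
        have c := neg_abs_le (h x - h s)
        have d : U * (x - s) ≤ U * (S - s) := by gcongr; exact hx.2.le
        linarith
      have lim : Tendsto (fun x => h s - h x) (nhdsWithin S (Iio S)) (nhds (h s - 0)) :=
        tendsto_const_nhds.sub hlim
      have := le_of_tendsto lim ev
      linarith
    -- choose d
    have hd : ∃ d, 0 < d ∧ d ≤ S - s1 ∧
        U ^ 3 * (M * d ^ 3 + 2 * (V + 1) / k₀ * d ^ 2) < 1 := by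
      have hc : Continuous (fun d : ℝ => U ^ 3 * (M * d ^ 3 + 2 * (V + 1) / k₀ * d ^ 2)) := by
        fun_prop
      have h1 : ∀ᶠ d in nhdsWithin (0:ℝ) (Ioi 0),
          U ^ 3 * (M * d ^ 3 + 2 * (V + 1) / k₀ * d ^ 2) < 1 := by
        apply mem_nhdsWithin_of_mem_nhds
        exact (isOpen_lt hc continuous_const).mem_nhds (by simp)
      have h2 : ∀ᶠ d in nhdsWithin (0:ℝ) (Ioi 0), d ∈ Ioo 0 (S - s1) :=
        Ioo_mem_nhdsGT (by linarith [hs1.2])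
      obtain ⟨d, hd1, hd2⟩ := (h1.and h2).exists
      exact ⟨d, hd2.1, hd2.2.le, hd1⟩
    obtain ⟨d, hd0, hd1, hd2⟩ := hd
    have subJ : Icc (S - d) (S - d/2) ⊆ Ico s1 S := fun x hx =>
      ⟨by linarith [hx.1], by linarith [hx.2]⟩
    have HJ := H1.mono subJ
    have an : AntitoneOn (fun s => v s + 2 * (V + 1) / d * s) (Icc (S - d) (S - d/2)) := by
      refine anti_help (convex_Icc _ _)
        (f' := fun x => kk (w x) * (a + w x ^ 2 - 1 / h x ^ 3) + 2 * (V + 1) / d * 1)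
        (fun x hx => (HJ x hx).2.2.1.add ((hasDerivWithinAt_id x _).const_mul _)) (fun x hx => ?_)
      have hx := interior_subset hx
      have hp := (HJ x hx).2.2.2.2
      have b1 : h x ≤ U * d := (hlin x (subJ hx)).trans (by gcongr; linarith [hx.1])
      have b2 : M + 2 * (V + 1) / k₀ / d ≤ 1 / h x ^ 3 := by
        rw [le_div_iff₀ (by positivity)]
        calc _ ≤ (M + 2 * (V + 1) / k₀ / d) * (U * d) ^ 3 := by gcongr
          _ = U ^ 3 * (M * d ^ 3 + 2 * (V + 1) / k₀ * d ^ 2) := by field_simp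
          _ ≤ 1 := hd2.le
      have b3 := hM x (sub1 (subJ hx))
      have b4 := hk x (sub1 (subJ hx))
      have b5 : a + w x ^ 2 - 1 / h x ^ 3 ≤ -(2 * (V + 1) / k₀ / d) := by linarith
      have b6 : kk (w x) * (a + w x ^ 2 - 1 / h x ^ 3) ≤ k₀ * -(2 * (V + 1) / k₀ / d) := by
        have b7 : 0 ≤ 2 * (V + 1) / k₀ / d := by positivity
        nlinarith [kk_pos (w x)]
      have b8 : k₀ * -(2 * (V + 1) / k₀ / d) = - (2 * (V + 1) / d) := by field_simp
      simp only [mul_one]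
      linarith
    have e1 : S - d ∈ Icc (S - d) (S - d/2) := ⟨le_rfl, by linarith⟩
    have e2 : S - d/2 ∈ Icc (S - d) (S - d/2) := ⟨by linarith, le_rfl⟩
    have e3 := an e1 e2 (by linarith)
    simp only at e3
    have e4 := hvV _ (subJ e1)
    have e5 := hv0 _ (subJ e2)
    have e6 : 2 * (V + 1) / d * (S - d/2) = 2 * (V + 1) / d * (S - d) + (V + 1) := by
      field_simp; ring
    linarith
  obtain ⟨s2, hs2, hv2⟩ := hv
  have hvn : ∀ s ∈ Ico s2 S, v s < 0 := fun s hs =>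
    (av hs2 ⟨hs2.1.trans hs.1, hs.2⟩ hs.1).trans_lt hv2
  have sub2 : Ico s2 S ⊆ Ico 0 S := (Ico_subset_Ico hs2.1 le_rfl).trans sub1
  have H2 := H.mono sub2
  have m2 : s2 ∈ Ico s2 S := ⟨le_rfl, hs2.2⟩
  have au : AntitoneOn u (Ico s2 S) := anti_help (convex_Ico s2 S) (fun x hx => (H2 x hx).2.1)
    (fun x hx => mul_nonpos_of_nonneg_of_nonpos (kk_pos _).le (hvn x (interior_subset hx)).le)
  have hu : ∃ s3 ∈ Ico s2 S, u s3 < 0 := by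
    by_contra! hu0
    have am : AntitoneOn (fun s => - h s) (Ico s2 S) :=
      anti_help (convex_Ico s2 S) (fun x hx => (H2 x hx).1.neg)
      (fun x hx => by
        have := mul_nonneg (kk_pos (w x)).le (hu0 x (interior_subset hx)); linarith)
    have hp := (H2 s2 m2).2.2.2.2
    obtain ⟨s4, hs4, hs4h⟩ := hsmall (h s2) hp
    have m4 : max s2 s4 ∈ Ico s2 S := ⟨le_max_left _ _, max_lt hs2.2 hs4.2⟩
    have := am m2 m4 m4.1
    have := hs4h (max s2 s4) ⟨le_max_right _ _, m4.2⟩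
    simp only at *
    linarith
  obtain ⟨s3, hs3, hu3⟩ := hu
  refine ⟨-u s3 / 2, by linarith, fun η hη => ?_⟩
  obtain ⟨s4, hs4, hs4h⟩ := hsmall η hη
  have m4 : max s3 s4 ∈ Ico s2 S := ⟨hs3.1.trans (le_max_left _ _), max_lt hs3.2 hs4.2⟩
  refine ⟨max s3 s4, sub2 m4, hs4h _ ⟨le_max_right _ _, m4.2⟩, ?_, hvn _ m4⟩
  have := au hs3 m4 (le_max_left _ _)
  linarith

lemma bounded_help {a σ : ℝ} (hσ : 0 < σ) {h u v w : ℝ → ℝ} (H : Esys a (Ico 0 σ) h u v w)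
    {c : ℝ} (hc : 0 < c) (hh : ∀ s ∈ Ico 0 σ, c ≤ h s) :
    ∃ R, ∀ s ∈ Ico 0 σ, |h s| ≤ R ∧ |u s| ≤ R ∧ |v s| ≤ R ∧ |w s| ≤ R := by
  have m0 : (0:ℝ) ∈ Ico 0 σ := ⟨le_rfl, hσ⟩
  have step : ∀ (f g : ℝ → ℝ) (C : ℝ), (∀ x ∈ Ico 0 σ, HasDerivWithinAt f (kk (w x) * g x) (Ico 0 σ) x) →
      (∀ x ∈ Ico 0 σ, |g x| ≤ C) → ∀ s ∈ Ico 0 σ, |f s| ≤ |f 0| + C * σ := by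
    intro f g C hf hg s hs
    have hC : 0 ≤ C := (abs_nonneg _).trans (hg 0 m0)
    have b := bd_help (C := C) (convex_Ico 0 σ) hf (fun x hx => by
      rw [abs_mul, abs_of_pos (kk_pos _)]
      calc _ ≤ 1 * |g x| := by gcongr; exact kk_le_one _
        _ ≤ C := by rw [one_mul]; exact hg x hx) m0 hs
    rw [sub_zero, abs_of_nonneg hs.1] at b
    have c := abs_sub_abs_le_abs_sub (f s) (f 0)
    have d : C * s ≤ C * σ := by gcongr; exact hs.2.le
    linarith
  have bw : ∀ s ∈ Ico 0 σ, |w s| ≤ |w 0| + 1 * σ := step w (fun _ => 1) 1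
    (fun x hx => by simpa using (H x hx).2.2.2.1) (by simp)
  have bv := step v (fun x => a + w x ^ 2 - 1 / h x ^ 3)
    (|a| + (|w 0| + 1 * σ) ^ 2 + 1 / c ^ 3) (fun x hx => (H x hx).2.2.1) (fun x hx => by
      have hp := (H x hx).2.2.2.2
      have e1 : 1 / h x ^ 3 ≤ 1 / c ^ 3 := by
        have := hh x hx
        gcongr
      have e0 : 0 < 1 / h x ^ 3 := by positivity
      have e2 : w x ^ 2 ≤ (|w 0| + 1 * σ) ^ 2 := by
        rw [← sq_abs]; gcongr; exact bw x hx
      rw [abs_le]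
      have := neg_abs_le a
      have := le_abs_self a
      have := sq_nonneg (w x)
      have := sq_nonneg (|w 0| + 1 * σ)
      have : 0 < 1 / c ^ 3 := by positivity
      constructor <;> linarith)
  have bu := step u v _ (fun x hx => (H x hx).2.1) bv
  have bh := step h u _ (fun x hx => (H x hx).1) bu
  refine ⟨max (max (|h 0| + (|u 0| + (|v 0| + (|a| + (|w 0| + 1 * σ) ^ 2 + 1 / c ^ 3) * σ) * σ) * σ)
    (|u 0| + (|v 0| + (|a| + (|w 0| + 1 * σ) ^ 2 + 1 / c ^ 3) * σ) * σ))
    (max (|v 0| + (|a| + (|w 0| + 1 * σ) ^ 2 + 1 / c ^ 3) * σ) (|w 0| + 1 * σ)), fun s hs => ⟨?_, ?_, ?_, ?_⟩⟩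
  · exact (bh s hs).trans (le_max_of_le_left (le_max_left _ _))
  · exact (bu s hs).trans (le_max_of_le_left (le_max_right _ _))
  · exact (bv s hs).trans (le_max_of_le_right (le_max_left _ _))
  · exact (bw s hs).trans (le_max_of_le_right (le_max_right _ _))

lemma core {a S : ℝ} (hS : 0 < S) {Y : ℝ → ℝ × ℝ × ℝ × ℝ} (hY : IsSolU (FF a) UU Y (Ico 0 S))
    (hlim : Tendsto (fun s => (Y s).1) (nhdsWithin S (Iio S)) (nhds 0)) :
    ∃ δ > 0, ∀ y, dist y (Y 0) < δ → ∃ σ, 0 < σ ∧ ∃ Z : ℝ → ℝ × ℝ × ℝ × ℝ, Z 0 = y ∧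
      IsSolU (FF a) UU Z (Ico 0 σ) ∧
      Tendsto (fun s => (Z s).1) (nhdsWithin σ (Iio σ)) (nhds 0) := by
  have m0 : (0:ℝ) ∈ Ico 0 S := ⟨le_rfl, hS⟩
  set Wm := |(Y 0).2.2.2| + S + 2 with hWm
  set M := |a| + Wm ^ 2 + 1 with hM
  have hMpos : 0 < M := by positivity
  have hMb : ∀ x, |x| ≤ Wm → a + x ^ 2 ≤ M := by
    intro x hx
    have : x ^ 2 ≤ Wm ^ 2 := by rw [← sq_abs]; gcongr
    linarith [le_abs_self a]
  have EY := Esys_of_sol hY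
  have hwY : ∀ s ∈ Ico 0 S, |(Y s).2.2.2| ≤ Wm := by
    intro s hs
    have := w_bound (convex_Ico 0 S) EY m0 hs hs.1
    linarith [hs.2]
  obtain ⟨κ, hκ, hreg⟩ := ref_region hS EY hlim hMpos (kk_pos Wm)
    (fun s hs => hMb _ (hwY s hs)) (fun s hs => kk_anti (hwY s hs))
  have hkp := kk_pos Wm
  set η := min 1 (min (1/M) (kk Wm * κ)) with hηd
  have hηpos : 0 < η := by positivity
  have hη1 : η ≤ 1 := min_le_left _ _
  have hη2 : η ≤ 1/M := (min_le_right _ _).trans (min_le_left _ _)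
  have hη3 : η ≤ kk Wm * κ := (min_le_right _ _).trans (min_le_right _ _)
  have hηM : η ^ 3 * M ≤ 1 := by
    calc η ^ 3 * M ≤ η * M := by
          gcongr
          exact pow_le_of_le_one hηpos.le hη1 (by norm_num)
      _ ≤ 1/M * M := by gcongr
      _ = 1 := by field_simp
  obtain ⟨s₀, hs₀, hh0, hu0, hv0⟩ := hreg η hηpos
  have subs0 : Icc 0 s₀ ⊆ Ico 0 S := fun x hx => ⟨hx.1, hx.2.trans_lt hs₀.2⟩
  have ms0 : s₀ ∈ Icc 0 s₀ := ⟨hs₀.1, le_rfl⟩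
  obtain ⟨δ, hδ, hdep⟩ := sol_dep UU_open (FF_contDiff a) hs₀.1 (hY.mono subs0)
    (ε := min (η - (Y s₀).1) (min (-κ - (Y s₀).2.1) (-(Y s₀).2.2.1)))
    (lt_min (by linarith) (lt_min (by linarith) (by linarith)))
  refine ⟨min δ 1, by positivity, fun y hy => ?_⟩
  obtain ⟨X, hX0, hX, hXd⟩ := hdep y (hy.trans_le (min_le_left _ _))
  have hd := hXd s₀ ms0
  obtain ⟨hdA, hdB⟩ := lt_min_iff.1 hd
  obtain ⟨hdB, hdC⟩ := lt_min_iff.1 hdB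
  have d1 : dist (X s₀).1 (Y s₀).1 ≤ dist (X s₀) (Y s₀) := by
    rw [Prod.dist_eq]; exact le_max_left _ _
  have d2' : dist (X s₀).2 (Y s₀).2 ≤ dist (X s₀) (Y s₀) := by
    rw [Prod.dist_eq (x := X s₀)]; exact le_max_right _ _
  have d2 : dist (X s₀).2.1 (Y s₀).2.1 ≤ dist (X s₀) (Y s₀) := by
    refine le_trans ?_ d2'; rw [Prod.dist_eq]; exact le_max_left _ _
  have d3' : dist (X s₀).2.2 (Y s₀).2.2 ≤ dist (X s₀) (Y s₀) := by
    refine le_trans ?_ d2'; rw [Prod.dist_eq (x := (X s₀).2)]; exact le_max_right _ _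
  have d3 : dist (X s₀).2.2.1 (Y s₀).2.2.1 ≤ dist (X s₀) (Y s₀) := by
    refine le_trans ?_ d3'; rw [Prod.dist_eq]; exact le_max_left _ _
  rw [Real.dist_eq] at d1 d2 d3
  have x1 : (X s₀).1 < η := by linarith [le_abs_self ((X s₀).1 - (Y s₀).1)]
  have x2 : (X s₀).2.1 < -κ := by linarith [le_abs_self ((X s₀).2.1 - (Y s₀).2.1)]
  have x3 : (X s₀).2.2.1 < 0 := by linarith [le_abs_self ((X s₀).2.2.1 - (Y s₀).2.2.1)]
  have hyw : |y.2.2.2| ≤ |(Y 0).2.2.2| + 1 := by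
    have e1 : dist y.2.2.2 (Y 0).2.2.2 ≤ dist y (Y 0) := by
      rw [Prod.dist_eq (x := y), Prod.dist_eq (x := y.2), Prod.dist_eq (x := y.2.2)]
      exact le_max_of_le_right (le_max_of_le_right (le_max_right _ _))
    rw [Real.dist_eq] at e1
    have := abs_sub_abs_le_abs_sub y.2.2.2 (Y 0).2.2.2
    have := hy.trans_le (min_le_right _ _)
    linarith
  -- trapping for any solution
  have hyU : y ∈ UU := by rw [← hX0]; exact (hX 0 ⟨le_rfl, hs₀.1⟩).2
  have htrap : ∀ (Z : ℝ → ℝ × ℝ × ℝ × ℝ) (t : ℝ), Z 0 = y → s₀ ≤ t → t ≤ s₀ + 1 →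
      IsSolU (FF a) UU Z (Icc 0 t) → Z s₀ = X s₀ ∧
      (∀ s ∈ Icc s₀ t, (Z s).2.1 < -κ ∧ |(Z s).2.2.2| ≤ Wm) := by
    intro Z t hZ0 ht ht1 hZ
    have eq := sol_unique UU_open (FF_contDiff a) (hZ.mono (Icc_subset_Icc le_rfl ht)) hX
      (hZ0.trans hX0.symm) ms0
    have EZ := Esys_of_sol hZ
    have hw : ∀ s ∈ Icc 0 t, |(Z s).2.2.2| ≤ Wm := by
      intro s hs
      have b := w_bound (convex_Icc 0 t) EZ ⟨le_rfl, hs₀.1.trans ht⟩ hs hs.1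
      simp only [hZ0] at b
      linarith [hs.2, hs₀.2]
    have sub : Icc s₀ t ⊆ Icc 0 t := Icc_subset_Icc hs₀.1 le_rfl
    have := trap (EZ.mono sub) hκ (fun s hs => hMb _ (hw s (sub hs))) hηM
      (by simpa only [eq] using x1) (by simpa only [eq] using x2) (by simpa only [eq] using x3)
    exact ⟨eq, fun s hs => ⟨(this s hs).2.1, hw s (sub hs)⟩⟩
  have hno : ¬ ∃ Z : ℝ → ℝ × ℝ × ℝ × ℝ, Z 0 = y ∧ IsSolU (FF a) UU Z (Icc 0 (s₀ + 1)) := by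
    rintro ⟨Z, hZ0, hZ⟩
    obtain ⟨e, htr⟩ := htrap Z (s₀+1) hZ0 (by linarith) le_rfl hZ
    have sub : Icc s₀ (s₀+1) ⊆ Icc 0 (s₀+1) := Icc_subset_Icc hs₀.1 le_rfl
    have EZ := (Esys_of_sol hZ).mono sub
    have an : AntitoneOn (fun s => (Z s).1 + kk Wm * κ * s) (Icc s₀ (s₀+1)) := by
      refine anti_help (convex_Icc _ _)
        (f' := fun x => kk (Z x).2.2.2 * (Z x).2.1 + kk Wm * κ * 1)
        (fun x hx => (EZ x hx).1.add ((hasDerivWithinAt_id x _).const_mul _)) (fun x hx => ?_)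
      have := htr x (interior_subset hx)
      have h2 := kk_anti this.2
      nlinarith [this.1]
    have m1 : s₀ ∈ Icc s₀ (s₀+1) := ⟨le_rfl, by linarith⟩
    have m2 : s₀ + 1 ∈ Icc s₀ (s₀+1) := ⟨by linarith, le_rfl⟩
    have e3 := an m1 m2 (by linarith)
    have p := (EZ _ m2).2.2.2.2
    simp only [e] at e3 p
    nlinarith
  obtain ⟨σ, hσ, hσ1, Z, hZ0, hZ, hesc⟩ := sol_max UU_open (FF_contDiff a) hyU
    (by linarith [hs₀.1] : 0 ≤ s₀ + 1) hno
  have hs0σ : s₀ < σ := by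
    by_contra! hle
    obtain ⟨s, hs, hsC⟩ := hesc (X '' Icc 0 s₀)
      (isCompact_Icc.image_of_continuousOn hX.continuousOn)
      (by rintro _ ⟨s, hs, rfl⟩; exact (hX s hs).2)
    apply hsC
    have hss : s ≤ s₀ := hs.2.le.trans hle
    refine ⟨s, ⟨hs.1, hss⟩, ?_⟩
    exact sol_unique UU_open (FF_contDiff a) (hX.mono (Icc_subset_Icc le_rfl hss))
      (hZ.mono (fun x hx => ⟨hx.1, hx.2.trans_lt hs.2⟩)) (hX0.trans hZ0.symm) ⟨hs.1, le_rfl⟩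
  have EZ := Esys_of_sol hZ
  have hunZ : ∀ s ∈ Ico s₀ σ, (Z s).2.1 < -κ := by
    intro s hs
    exact ((htrap Z s hZ0 hs.1 (hs.2.le.trans hσ1)
      (hZ.mono (fun x hx => ⟨hx.1, hx.2.trans_lt hs.2⟩))).2 s ⟨hs.1, le_rfl⟩).1
  have sub : Ico s₀ σ ⊆ Ico 0 σ := Ico_subset_Ico hs₀.1 le_rfl
  have anh : AntitoneOn (fun s => (Z s).1) (Ico s₀ σ) :=
    anti_help (convex_Ico s₀ σ) (fun x hx => ((EZ.mono sub) x hx).1) (fun x hx => 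
      mul_nonpos_of_nonneg_of_nonpos (kk_pos _).le (by linarith [hunZ x (interior_subset hx)]))
  refine ⟨σ, hσ, Z, hZ0, hZ, ?_⟩
  have hsmall : ∀ c > 0, ∃ s ∈ Ico s₀ σ, (Z s).1 < c := by
    intro c hc
    by_contra! hcon
    have subz : Icc 0 s₀ ⊆ Ico 0 σ := fun x hx => ⟨hx.1, hx.2.trans_lt hs0σ⟩
    have cz : ContinuousOn (fun s => (Z s).1) (Icc 0 s₀) :=
      fun x hx => (EZ.mono subz x hx).1.continuousWithinAt
    obtain ⟨x0, hx0, hmin⟩ := isCompact_Icc.exists_isMinOn ⟨s₀, ms0⟩ cz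
    have hp := (EZ x0 (subz hx0)).2.2.2.2
    have hlow : ∀ s ∈ Ico 0 σ, min c (Z x0).1 ≤ (Z s).1 := by
      intro s hs
      rcases le_or_gt s s₀ with h | h
      · exact (min_le_right _ _).trans (hmin ⟨hs.1, h⟩)
      · exact (min_le_left _ _).trans (hcon s ⟨h.le, hs.2⟩)
    have hc' : 0 < min c (Z x0).1 := lt_min hc hp
    obtain ⟨R, hR⟩ := bounded_help hσ EZ hc' hlow
    obtain ⟨s, hs, hsC⟩ := hesc
      (Icc (min c (Z x0).1) R ×ˢ Icc (-R) R ×ˢ Icc (-R) R ×ˢ Icc (-R) R)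
      (isCompact_Icc.prod (isCompact_Icc.prod (isCompact_Icc.prod isCompact_Icc)))
      (fun z hz => hc'.trans_le hz.1.1)
    obtain ⟨r1, r2, r3, r4⟩ := hR s hs
    exact hsC ⟨⟨hlow s hs, (le_abs_self _).trans r1⟩, abs_le.1 r2, abs_le.1 r3, abs_le.1 r4⟩
  rw [Metric.tendsto_nhds]
  intro c hc
  obtain ⟨s, hs, hsc⟩ := hsmall c hc
  filter_upwards [Ioo_mem_nhdsLT hs.2] with x hx
  have mx : x ∈ Ico s₀ σ := ⟨hs.1.trans hx.1.le, hx.2⟩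
  have h1 := anh hs mx hx.1.le
  have h2 := (EZ x (sub mx)).2.2.2.2
  simp only at h1 h2
  rw [Real.dist_eq, sub_zero, abs_of_pos h2]
  linarith

lemma rpow_aux (b : ℝ) (hb : 0 < b) : b ^ ((1:ℝ)/9 - 1) = ((b ^ ((1:ℝ)/9)) ^ 8)⁻¹ := by
  rw [← Real.rpow_natCast, ← Real.rpow_mul hb.le, ← Real.rpow_neg hb.le]
  norm_num

lemma rr_deriv (x : ℝ) : HasDerivAt rr (2 / 9 * x / rr x ^ 8) x := by
  have h1 : HasDerivAt (fun w : ℝ => 1 + w ^ 2) (2 * x) x := by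
    simpa using ((hasDerivAt_id x).pow 2).const_add 1
  have hp : 0 < 1 + x ^ 2 := by positivity
  have h2 := h1.rpow_const (p := (1:ℝ)/9) (Or.inl hp.ne')
  have e : (1 + x ^ 2) ^ ((1:ℝ)/9 - 1) = (rr x ^ 8)⁻¹ := rpow_aux _ hp
  have h3 : HasDerivAt rr _ x := h2
  refine h3.congr_deriv ?_
  rw [e]
  have := rr_pos x
  field_simp

lemma cos_pow {θ : ℝ} (hθ : θ ∈ Ioo (-(Real.pi / 2)) (Real.pi / 2)) (n : ℕ) (y : ℝ)
    (hy : y = 2 * n / 9) : Real.cos θ ^ y = (rr (Real.tan θ) ^ n)⁻¹ := by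
  have hc : 0 < Real.cos θ := Real.cos_pos_of_mem_Ioo hθ
  have h1 : 1 + Real.tan θ ^ 2 = Real.cos θ ^ (-2 : ℝ) := by
    rw [← inv_inv (1 + Real.tan θ ^ 2), Real.inv_one_add_tan_sq hc.ne', Real.rpow_neg hc.le]
    norm_num
  rw [rr, h1, ← Real.rpow_natCast, ← Real.rpow_mul hc.le, ← Real.rpow_mul hc.le,
    ← Real.rpow_neg hc.le]
  congr 1
  rw [hy]; ring

/-- `dPsi` in rational variables -/
noncomputable def DD (a Φ W Ψ x r : ℝ) : ℝ :=
  1 / Φ ^ 3 - (a + x ^ 2) / r ^ 9 - ((16 / 3 * x / r ^ 30 - 224 / 27 * x ^ 3 / r ^ 39) * Φ +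
    (208 / 81 * x ^ 2 / r ^ 9 - 10 / 9) / r ^ 17 * W + 2 / 3 * x / r ^ 13 * Ψ)

lemma dPsi_eq {θ : ℝ} (hθ : θ ∈ Ioo (-(Real.pi / 2)) (Real.pi / 2)) (a Φ W Ψ : ℝ) :
    dPsi a Φ W Ψ θ = DD a Φ W Ψ (Real.tan θ) (rr (Real.tan θ)) := by
  have hc : 0 < Real.cos θ := Real.cos_pos_of_mem_Ioo hθ
  have hs : Real.sin θ = Real.tan θ * Real.cos θ := (Real.tan_mul_cos hc.ne').symm
  have h2 : Real.cos θ ^ 2 = (rr (Real.tan θ) ^ 9)⁻¹ := by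
    rw [← cos_pow hθ 9 2 (by norm_num)]; norm_num
  have h3 : Real.cos θ * Real.cos θ ^ ((17:ℝ)/3) = (rr (Real.tan θ) ^ 30)⁻¹ := by
    rw [← cos_pow hθ 30 (1 + 17/3) (by norm_num), Real.rpow_add hc, Real.rpow_one]
  have h4 : Real.cos θ ^ ((34:ℝ)/9) = (rr (Real.tan θ) ^ 17)⁻¹ := cos_pow hθ 17 _ (by norm_num)
  have h5 : Real.cos θ * Real.cos θ ^ ((17:ℝ)/9) = (rr (Real.tan θ) ^ 13)⁻¹ := by
    rw [← cos_pow hθ 13 (1 + 17/9) (by norm_num), Real.rpow_add hc, Real.rpow_one]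
  have h9 := rr_pow (Real.tan θ)
  have hr := rr_pos (Real.tan θ)
  rw [dPsi, DD, hs, h4]
  generalize Real.tan θ = x at *
  generalize rr x = r at *
  generalize Real.cos θ ^ ((17:ℝ)/3) = A at *
  generalize Real.cos θ ^ ((17:ℝ)/9) = B at *
  generalize Real.cos θ = c at *
  have e1 : -1 - (a - 1) * c ^ 2 = - (a + x ^ 2) / r ^ 9 := by
    rw [h2, eq_div_iff (by positivity), sub_mul, mul_assoc, inv_mul_cancel₀ (by positivity)]
    linarith
  have e2 : (16 / 3 * (x * c) - 224 / 27 * (x * c) ^ 3) * A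
      = 16 / 3 * x / r ^ 30 - 224 / 27 * x ^ 3 / r ^ 39 := by
    have : (16 / 3 * (x * c) - 224 / 27 * (x * c) ^ 3) * A
      = 16 / 3 * x * (c * A) - 224 / 27 * x ^ 3 * (c ^ 2 * (c * A)) := by ring
    rw [this, h3, h2]
    field_simp
  have e3 : 2 / 3 * (x * c) * B = 2 / 3 * x / r ^ 13 := by
    have : 2 / 3 * (x * c) * B = 2 / 3 * x * (c * B) := by ring
    rw [this, h5]; field_simp
  have e4 : (208 / 81 * (x * c) ^ 2 - 10 / 9) * (r ^ 17)⁻¹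
      = (208 / 81 * x ^ 2 / r ^ 9 - 10 / 9) / r ^ 17 := by
    rw [mul_pow, h2]; field_simp
  rw [e2, e3, e4]
  linear_combination e1

lemma fwd {a : ℝ} {S : Set ℝ} {t : ℝ} {Φ W Ψ x : ℝ → ℝ} (hΦp : 0 < Φ t)
    (hΦ : HasDerivWithinAt Φ (W t) S t) (hW : HasDerivWithinAt W (Ψ t) S t)
    (hΨ : HasDerivWithinAt Ψ (DD a (Φ t) (W t) (Ψ t) (x t) (rr (x t))) S t)
    (hx : HasDerivWithinAt x (kk (x t)) S t) :
    HasDerivWithinAt (fun t => Φ t / rr (x t) ^ 3)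
      (kk (x t) * (rr (x t) * W t - 2 / 3 * x t * Φ t / rr (x t) ^ 12)) S t ∧
    HasDerivWithinAt (fun t => rr (x t) * W t - 2 / 3 * x t * Φ t / rr (x t) ^ 12)
      (kk (x t) * (rr (x t) ^ 5 * Ψ t
        - 4 / 9 * x t * (rr (x t) * W t - 2 / 3 * x t * Φ t / rr (x t) ^ 12) / rr (x t) ^ 9
        - 2 / 3 * Φ t / rr (x t) ^ 12 + 40 / 27 * x t ^ 2 * Φ t / rr (x t) ^ 21)) S t ∧
    HasDerivWithinAt (fun t => rr (x t) ^ 5 * Ψ t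
        - 4 / 9 * x t * (rr (x t) * W t - 2 / 3 * x t * Φ t / rr (x t) ^ 12) / rr (x t) ^ 9
        - 2 / 3 * Φ t / rr (x t) ^ 12 + 40 / 27 * x t ^ 2 * Φ t / rr (x t) ^ 21)
      (kk (x t) * (1 / (Φ t / rr (x t) ^ 3) ^ 3 - a - x t ^ 2)) S t := by
  have hrp := rr_pos (x t)
  have hn : ∀ n : ℕ, rr (x t) ^ n ≠ 0 := fun n => (pow_pos hrp n).ne'
  have hr : HasDerivWithinAt (fun t => rr (x t)) (2 / 9 * x t / rr (x t) ^ 8 * kk (x t)) S t :=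
    (rr_deriv (x t)).comp_hasDerivWithinAt t hx
  have h1 := hΦ.div (hr.fun_pow 3) (hn 3)
  have h2 := (hr.mul hW).sub (((hx.const_mul (2/3)).mul hΦ).div (hr.fun_pow 12) (hn 12))
  have h3 := ((((hr.fun_pow 5).mul hΨ).sub
    (((hx.const_mul (4/9)).mul h2).div (hr.fun_pow 9) (hn 9))).sub
    ((hΦ.const_mul (2/3)).div (hr.fun_pow 12) (hn 12))).add
    ((((hx.fun_pow 2).const_mul (40/27)).mul hΦ).div (hr.fun_pow 21) (hn 21))
  refine ⟨h1.congr_deriv ?_, h2.congr_deriv ?_, h3.congr_deriv ?_⟩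
  all_goals
    simp only [kk, DD, Pi.mul_apply, Pi.sub_apply, Pi.div_apply, Pi.add_apply]
    generalize rr (x t) = r at *
    generalize x t = X at *
    generalize Φ t = P at *
    generalize W t = Q at *
    generalize Ψ t = R at *
    push_cast
    field_simp
    ring

lemma bwd {a : ℝ} {S : Set ℝ} {t : ℝ} {h p q x : ℝ → ℝ} (hp0 : 0 < h t)
    (hh : HasDerivWithinAt h (kk (x t) * p t) S t) (hp : HasDerivWithinAt p (kk (x t) * q t) S t)
    (hq : HasDerivWithinAt q (kk (x t) * (1 / h t ^ 3 - a - x t ^ 2)) S t)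
    (hx : HasDerivWithinAt x (kk (x t)) S t) :
    HasDerivWithinAt (fun t => h t * rr (x t) ^ 3)
      (p t / rr (x t) + 2 / 3 * x t * h t / rr (x t) ^ 10) S t ∧
    HasDerivWithinAt (fun t => p t / rr (x t) + 2 / 3 * x t * h t / rr (x t) ^ 10)
      (q t / rr (x t) ^ 5 + 4 / 9 * x t * p t / rr (x t) ^ 14 + 2 / 3 * h t / rr (x t) ^ 14
        - 40 / 27 * x t ^ 2 * h t / rr (x t) ^ 23) S t ∧
    HasDerivWithinAt (fun t => q t / rr (x t) ^ 5 + 4 / 9 * x t * p t / rr (x t) ^ 14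
        + 2 / 3 * h t / rr (x t) ^ 14 - 40 / 27 * x t ^ 2 * h t / rr (x t) ^ 23)
      (DD a (h t * rr (x t) ^ 3) (p t / rr (x t) + 2 / 3 * x t * h t / rr (x t) ^ 10)
        (q t / rr (x t) ^ 5 + 4 / 9 * x t * p t / rr (x t) ^ 14 + 2 / 3 * h t / rr (x t) ^ 14
        - 40 / 27 * x t ^ 2 * h t / rr (x t) ^ 23) (x t) (rr (x t))) S t := by
  have hrp := rr_pos (x t)
  have hn : ∀ n : ℕ, rr (x t) ^ n ≠ 0 := fun n => (pow_pos hrp n).ne'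
  have hr : HasDerivWithinAt (fun t => rr (x t)) (2 / 9 * x t / rr (x t) ^ 8 * kk (x t)) S t :=
    (rr_deriv (x t)).comp_hasDerivWithinAt t hx
  have h1 := hh.mul (hr.fun_pow 3)
  have h2 := (hp.div hr hrp.ne').add (((hx.const_mul (2/3)).mul hh).div (hr.fun_pow 10) (hn 10))
  have h3 := (((hq.div (hr.fun_pow 5) (hn 5)).add
    (((hx.const_mul (4/9)).mul hp).div (hr.fun_pow 14) (hn 14))).add
    ((hh.const_mul (2/3)).div (hr.fun_pow 14) (hn 14))).sub
    ((((hx.fun_pow 2).const_mul (40/27)).mul hh).div (hr.fun_pow 23) (hn 23))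
  refine ⟨h1.congr_deriv ?_, h2.congr_deriv ?_, h3.congr_deriv ?_⟩
  all_goals
    simp only [kk, DD, Pi.mul_apply, Pi.sub_apply, Pi.div_apply, Pi.add_apply]
    generalize rr (x t) = r at *
    generalize x t = X at *
    generalize h t = P at *
    generalize p t = Q at *
    generalize q t = R at *
    push_cast
    field_simp
    ring

lemma neg_help {f : ℝ → ℝ} {f' s : ℝ} {S S' : Set ℝ} (hf : HasDerivWithinAt f f' S (-s))
    (hm : MapsTo (fun s : ℝ => -s) S' S) : HasDerivWithinAt (fun s => f (-s)) (-f') S' s := by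
  have := HasDerivWithinAt.comp s hf (hasDerivWithinAt_neg s S') hm
  simpa [Function.comp_def] using this

/-- change of variables -/
noncomputable def TT (z : ℝ × ℝ × ℝ × ℝ) : ℝ × ℝ × ℝ × ℝ :=
  let x := Real.tan z.2.2.2
  (z.1 / rr x ^ 3, -(rr x * z.2.1 - 2 / 3 * x * z.1 / rr x ^ 12),
    rr x ^ 5 * z.2.2.1 - 4 / 9 * x * (rr x * z.2.1 - 2 / 3 * x * z.1 / rr x ^ 12) / rr x ^ 9
        - 2 / 3 * z.1 / rr x ^ 12 + 40 / 27 * x ^ 2 * z.1 / rr x ^ 21, -x)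

lemma TT_cont {z : ℝ × ℝ × ℝ × ℝ} (hz : z.2.2.2 ∈ Ioo (-(Real.pi / 2)) (Real.pi / 2)) :
    ContinuousAt TT z := by
  have hc : Real.cos z.2.2.2 ≠ 0 := (Real.cos_pos_of_mem_Ioo hz).ne'
  have hx : ContinuousAt (fun z : ℝ × ℝ × ℝ × ℝ => Real.tan z.2.2.2) z :=
    ContinuousAt.comp (g := Real.tan) (f := fun z : ℝ × ℝ × ℝ × ℝ => z.2.2.2)
      (Real.continuousAt_tan.2 hc) (by fun_prop)
  have hr : ContinuousAt (fun z : ℝ × ℝ × ℝ × ℝ => rr (Real.tan z.2.2.2)) z :=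
    ContinuousAt.comp (g := rr) (f := fun z : ℝ × ℝ × ℝ × ℝ => Real.tan z.2.2.2)
      (rr_contDiff.continuous.continuousAt) hx
  have hn : ∀ n : ℕ, rr (Real.tan z.2.2.2) ^ n ≠ 0 := fun n => (pow_pos (rr_pos _) n).ne'
  have c1 : ContinuousAt (fun z : ℝ × ℝ × ℝ × ℝ => z.1) z := by fun_prop
  have c2 : ContinuousAt (fun z : ℝ × ℝ × ℝ × ℝ => z.2.1) z := by fun_prop
  have c3 : ContinuousAt (fun z : ℝ × ℝ × ℝ × ℝ => z.2.2.1) z := by fun_prop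
  have cP := (hr.mul c2).sub (((hx.const_mul (2/3)).mul c1).div (hr.pow 12) (hn 12))
  have cQ := ((((hr.pow 5).mul c3).sub
    (((hx.const_mul (4/9)).mul cP).div (hr.pow 9) (hn 9))).sub
    ((c1.const_mul (2/3)).div (hr.pow 12) (hn 12))).add
    ((((hx.pow 2).const_mul (40/27)).mul c1).div (hr.pow 21) (hn 21))
  exact (c1.div (hr.pow 3) (hn 3)).prodMk (cP.neg.prodMk (cQ.prodMk hx.neg))

/-- the behaviour `Φ(τ) → 0` as `τ → τ*⁺` (touchdown in finite time) is stable
under small perturbations of the data at `τ = 0`. -/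
theorem stability_touchdown (a : ℝ) (τs : ℝ) (hτs : τs < 0) (Φ W Ψ θ : ℝ → ℝ)
    (hsol : SolDOn a (Set.Ioc τs 0) Φ W Ψ θ)
    (hΦpos : ∀ τ ∈ Set.Ioc τs (0 : ℝ), 0 < Φ τ)
    (hθ : ∀ τ ∈ Set.Ioc τs (0 : ℝ), θ τ ∈ Set.Ioo (-(Real.pi / 2)) (Real.pi / 2))
    (hzero : Tendsto Φ (nhdsWithin τs (Set.Ioi τs)) (nhds 0)) :
    ∃ δ > (0 : ℝ), ∀ Φ₀ W₀ Ψ₀ θ₀ : ℝ,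
      dist ((Φ₀, W₀, Ψ₀, θ₀) : ℝ × ℝ × ℝ × ℝ) ((Φ 0, W 0, Ψ 0, θ 0) : ℝ × ℝ × ℝ × ℝ) < δ →
      0 < Φ₀ → θ₀ ∈ Set.Ioo (-(Real.pi / 2)) (Real.pi / 2) →
      ∃ τts : ℝ, τts < 0 ∧
        ∃ Φt Wt Ψt θt : ℝ → ℝ,
          SolDOn a (Set.Ioc τts 0) Φt Wt Ψt θt ∧
          Φt 0 = Φ₀ ∧ Wt 0 = W₀ ∧ Ψt 0 = Ψ₀ ∧ θt 0 = θ₀ ∧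
          (∀ τ ∈ Set.Ioc τts (0 : ℝ), 0 < Φt τ) ∧
          Tendsto Φt (nhdsWithin τts (Set.Ioi τts)) (nhds 0) := by
  have hS : 0 < -τs := by linarith
  have mneg : MapsTo (fun s : ℝ => -s) (Ico 0 (-τs)) (Ioc τs 0) := fun s hs =>
    ⟨by linarith [hs.2], by linarith [hs.1]⟩
  -- reference solution in new variables
  have hY : IsSolU (FF a) UU (fun s => TT (Φ (-s), W (-s), Ψ (-s), θ (-s))) (Ico 0 (-τs)) := by
    refine sol_of_Esys (fun s hs => ?_)
    have ht := mneg hs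
    obtain ⟨d1, d2, d3, d4⟩ := hsol (-s) ht
    have hθs := hθ _ ht
    have hP := hΦpos _ ht
    rw [dPsi_eq hθs] at d3
    have hc : 0 < Real.cos (θ (-s)) := Real.cos_pos_of_mem_Ioo hθs
    have hx : HasDerivWithinAt (fun t => Real.tan (θ t)) (kk (Real.tan (θ (-s)))) (Ioc τs 0) (-s) := by
      refine ((Real.hasDerivAt_tan hc.ne').comp_hasDerivWithinAt (-s) d4).congr_deriv ?_
      rw [cos_pow hθs 13 _ (by norm_num), kk]
      have h2 : Real.cos (θ (-s)) ^ 2 = (rr (Real.tan (θ (-s))) ^ 9)⁻¹ := by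
        rw [← cos_pow hθs 9 2 (by norm_num)]; norm_num
      rw [h2]
      have := rr_pos (Real.tan (θ (-s)))
      field_simp
    obtain ⟨f1, f2, f3⟩ := fwd (x := fun t => Real.tan (θ t)) hP d1 d2 d3 hx
    have g1 := neg_help f1 mneg
    have g2 := (neg_help f2 mneg).neg
    have g3 := neg_help f3 mneg
    have g4 := (neg_help hx mneg).neg
    have hkk : kk (-Real.tan (θ (-s))) = kk (Real.tan (θ (-s))) := by simp only [kk, rr_neg]
    have hrp := rr_pos (Real.tan (θ (-s)))
    simp only [hkk]
    refine ⟨g1.congr_deriv ?_, ?_, g3.congr_deriv ?_, ?_, by positivity⟩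
    · ring
    · rw [neg_neg] at g2; exact g2
    · ring
    · rw [neg_neg] at g4; exact g4
  have hlim : Tendsto (fun s => (TT (Φ (-s), W (-s), Ψ (-s), θ (-s))).1)
      (nhdsWithin (-τs) (Iio (-τs))) (nhds 0) := by
    have t1 : Tendsto (fun s : ℝ => -s) (nhdsWithin (-τs) (Iio (-τs))) (nhdsWithin τs (Ioi τs)) := by
      have := tendsto_neg_nhdsLT_neg (a := τs)
      simpa using this
    have t2 := hzero.comp t1
    refine squeeze_zero' ?_ ?_ t2
    · filter_upwards [Ioo_mem_nhdsLT hS] with s hs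
      exact (hY s ⟨hs.1.le, hs.2⟩).2.le
    · filter_upwards [Ioo_mem_nhdsLT hS] with s hs
      have hP := hΦpos _ (mneg ⟨hs.1.le, hs.2⟩)
      exact div_le_self hP.le (one_le_pow₀ (rr_one_le _))
  obtain ⟨δ, hδ, hcore⟩ := core hS hY hlim
  have m0 : (0:ℝ) ∈ Ioc τs 0 := ⟨hτs, le_rfl⟩
  have hcont : ContinuousAt TT (Φ 0, W 0, Ψ 0, θ 0) := TT_cont (hθ 0 m0)
  obtain ⟨δ', hδ', hcd⟩ := Metric.continuousAt_iff.1 hcont δ hδ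
  refine ⟨δ', hδ', fun Φ₀ W₀ Ψ₀ θ₀ hdist hΦ₀ hθ₀ => ?_⟩
  obtain ⟨σ, hσ, Z, hZ0, hZ, hZlim⟩ := hcore (TT (Φ₀, W₀, Ψ₀, θ₀)) (by simpa using hcd hdist)
  have EZ := Esys_of_sol hZ
  have mneg' : MapsTo (fun s : ℝ => -s) (Ioc (-σ) 0) (Ico 0 σ) := fun s hs =>
    ⟨by linarith [hs.2], by linarith [hs.1]⟩
  set h : ℝ → ℝ := fun t => (Z (-t)).1 with hh
  set p : ℝ → ℝ := fun t => -(Z (-t)).2.1 with hp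
  set q : ℝ → ℝ := fun t => (Z (-t)).2.2.1 with hq
  set x : ℝ → ℝ := fun t => -(Z (-t)).2.2.2 with hx
  have hz : (h 0, -p 0, q 0, -x 0) = TT (Φ₀, W₀, Ψ₀, θ₀) := by
    simp only [hh, hp, hq, hx, neg_zero, neg_neg, hZ0]
  have e4 : x 0 = Real.tan θ₀ := by
    have := congrArg (fun z => z.2.2.2) hz
    simp only [TT] at this; linarith
  have e1 : h 0 = Φ₀ / rr (x 0) ^ 3 := by
    have := congrArg (fun z => z.1) hz
    rw [e4]; exact this
  have e2 : p 0 = rr (x 0) * W₀ - 2 / 3 * x 0 * Φ₀ / rr (x 0) ^ 12 := by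
    have := congrArg (fun z => z.2.1) hz
    simp only [TT] at this; rw [e4]; linarith
  have e3 : q 0 = rr (x 0) ^ 5 * Ψ₀ - 4 / 9 * x 0 * p 0 / rr (x 0) ^ 9
        - 2 / 3 * Φ₀ / rr (x 0) ^ 12 + 40 / 27 * x 0 ^ 2 * Φ₀ / rr (x 0) ^ 21 := by
    have := congrArg (fun z => z.2.2.1) hz
    rw [e2, e4]; exact this
  have hr0 := rr_pos (x 0)
  refine ⟨-σ, by linarith, fun t => h t * rr (x t) ^ 3,
    fun t => p t / rr (x t) + 2 / 3 * x t * h t / rr (x t) ^ 10,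
    fun t => q t / rr (x t) ^ 5 + 4 / 9 * x t * p t / rr (x t) ^ 14
        + 2 / 3 * h t / rr (x t) ^ 14 - 40 / 27 * x t ^ 2 * h t / rr (x t) ^ 23,
    fun t => Real.arctan (x t), ?_, ?_, ?_, ?_, ?_, ?_, ?_⟩
  · intro t ht
    have hs := mneg' ht
    obtain ⟨d1, d2, d3, d4, d5⟩ := EZ (-t) hs
    have hkk : kk (x t) = kk (Z (-t)).2.2.2 := by simp only [hx, kk, rr_neg]
    have g1 := neg_help d1 mneg'
    have g2 := (neg_help d2 mneg').neg
    have g3 := neg_help d3 mneg'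
    have g4 := (neg_help d4 mneg').neg
    have hx' : HasDerivWithinAt x (kk (x t)) (Ioc (-σ) 0) t := by
      rw [hkk]; rw [neg_neg] at g4; exact g4
    obtain ⟨b1, b2, b3⟩ := bwd (a := a) (h := h) (p := p) (q := q) (x := x) d5
      (by refine g1.congr_deriv ?_; rw [hkk]; simp only [hp]; ring)
      (by rw [hkk]; rw [neg_neg] at g2; exact g2)
      (by refine g3.congr_deriv ?_; rw [hkk]; simp only [hh, hx]; ring) hx'
    have hat := Real.arctan_mem_Ioo (x t)
    refine ⟨b1, b2, ?_, ?_⟩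
    · rw [dPsi_eq hat, Real.tan_arctan]; exact b3
    · refine ((Real.hasDerivAt_arctan (x t)).comp_hasDerivWithinAt t hx').congr_deriv ?_
      rw [cos_pow hat 13 _ (by norm_num), Real.tan_arctan, ← rr_pow, kk]
      have := rr_pos (x t)
      field_simp
  · simp only [e1]; field_simp
  · simp only [e2, e1]; field_simp; ring
  · simp only [e3, e1]; field_simp; ring
  · simp only [e4]; exact Real.arctan_tan hθ₀.1 hθ₀.2
  · intro t ht
    have := (EZ (-t) (mneg' ht)).2.2.2.2
    have := rr_pos (x t)
    simp only [hh]; positivity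
  · have t1 : Tendsto (fun s : ℝ => -s) (nhdsWithin (-σ) (Ioi (-σ))) (nhdsWithin σ (Iio σ)) := by
      have := tendsto_neg_nhdsGT_neg (a := σ)
      simpa using this
    have t2 : Tendsto (fun t => h t * rr (|(Z 0).2.2.2| + σ) ^ 3) (nhdsWithin (-σ) (Ioi (-σ)))
        (nhds 0) := by
      have := (hZlim.comp t1).mul_const (rr (|(Z 0).2.2.2| + σ) ^ 3)
      rw [zero_mul] at this
      exact this
    have hev : Ioo (-σ) 0 ∈ nhdsWithin (-σ) (Ioi (-σ)) := Ioo_mem_nhdsGT (by linarith)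
    refine squeeze_zero' ?_ ?_ t2
    · filter_upwards [hev] with t ht
      have := (EZ (-t) (mneg' ⟨ht.1, ht.2.le⟩)).2.2.2.2
      have := rr_pos (x t)
      simp only [hh]; positivity
    · filter_upwards [hev] with t ht
      have hm := mneg' ⟨ht.1, ht.2.le⟩
      have h1 := (EZ (-t) hm).2.2.2.2
      have h2 := w_bound (convex_Ico 0 σ) EZ ⟨le_rfl, hσ⟩ hm hm.1
      have h3 : rr (x t) ≤ rr (|(Z 0).2.2.2| + σ) := by
        apply rr_mono
        simp only [hx, abs_neg]
        have := hm.2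
        simp only at h2 this
        linarith
      have h4 := rr_pos (x t)
      have h5 : 0 < h t := h1
      gcongr
end

section
/- Let P₁(Y) = −Y⁵/60 + Y⁴/12 − Y³/6 and P₂(Y) = −Y³/6. Then: (i) P₁ and P₂ are strictly decreasing and positive on (−∞, 0); (ii) if λ ∈ ℝ satisfies 1 + 2λ > 0, then P₁(Y) + λ·P₂(Y) ≥ (1/2)·P₁(Y) for all Y < 0; (iii) if λ ∈ ℝ satisfies 1 + 2λ ≤ 0, then P₁(Y) + 2λ·P₂(Y) > −(4/5)·3^{3/2}·max{|1+2λ|^{5/2}, 1} for all Y < 0, and moreover P₁(Y) + 2λ·P₂(Y) ≥ 0 whenever Y ≤ 5/2 − √(25 − 40(1+2λ))/2. -/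
open Set

lemma aux_bound (y s : ℝ) (hy : 0 < y) (hs : 0 ≤ s) :
    0 ≤ y ^ 5 - 10 * s ^ 2 * y ^ 3 + 120 * s ^ 5 := by
  have h5 : 0 ≤ s ^ 5 := by positivity
  rcases le_total (4 * s) y with h | h
  · have h1 : 10 * s ^ 2 ≤ y ^ 2 := by nlinarith
    have h2 : 0 ≤ y ^ 3 * (y ^ 2 - 10 * s ^ 2) :=
      mul_nonneg (by positivity) (by linarith)
    nlinarith
  · have h1 : 0 ≤ y * (y ^ 2 - 5 * s ^ 2) ^ 2 := by positivity
    have h2 : 0 ≤ s ^ 4 * (4 * s - y) := mul_nonneg (by positivity) (by linarith)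
    nlinarith

/-- properties of the polynomials `P₁(Y) = -Y⁵/60 + Y⁴/12 - Y³/6` and
`P₂(Y) = -Y³/6` on `(-∞, 0)`. -/
theorem polynomial_inequalities :
    (StrictAntiOn (fun Y : ℝ => -Y ^ 5 / 60 + Y ^ 4 / 12 - Y ^ 3 / 6) (Set.Iio 0)) ∧
    (StrictAntiOn (fun Y : ℝ => -Y ^ 3 / 6) (Set.Iio 0)) ∧
    (∀ Y : ℝ, Y < 0 → 0 < -Y ^ 5 / 60 + Y ^ 4 / 12 - Y ^ 3 / 6) ∧
    (∀ Y : ℝ, Y < 0 → 0 < -Y ^ 3 / 6) ∧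
    (∀ lam : ℝ, 0 < 1 + 2 * lam → ∀ Y : ℝ, Y < 0 →
      (1 / 2) * (-Y ^ 5 / 60 + Y ^ 4 / 12 - Y ^ 3 / 6) ≤
        (-Y ^ 5 / 60 + Y ^ 4 / 12 - Y ^ 3 / 6) + lam * (-Y ^ 3 / 6)) ∧
    (∀ lam : ℝ, 1 + 2 * lam ≤ 0 →
      (∀ Y : ℝ, Y < 0 →
        -(4 / 5) * (3 : ℝ) ^ ((3 : ℝ) / 2) * max (|1 + 2 * lam| ^ ((5 : ℝ) / 2)) 1 <
          (-Y ^ 5 / 60 + Y ^ 4 / 12 - Y ^ 3 / 6) + 2 * lam * (-Y ^ 3 / 6)) ∧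
      (∀ Y : ℝ, Y ≤ 5 / 2 - Real.sqrt (25 - 40 * (1 + 2 * lam)) / 2 →
        0 ≤ (-Y ^ 5 / 60 + Y ^ 4 / 12 - Y ^ 3 / 6) + 2 * lam * (-Y ^ 3 / 6))) := by
  have key3 : StrictAntiOn (fun Y : ℝ => -Y ^ 3 / 6) (Set.Iio 0) := by
    intro a _ b _ hab
    have := (show Odd 3 by decide).strictMono_pow (R := ℝ) hab
    simp only at this ⊢
    linarith
  refine ⟨?_, key3, ?_, ?_, ?_, ?_⟩
  · intro a ha b hb hab
    have h3 := (show Odd 3 by decide).strictMono_pow (R := ℝ) hab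
    have h5 := (show Odd 5 by decide).strictMono_pow (R := ℝ) hab
    simp only [Set.mem_Iio] at *
    have h4 : (-b) ^ 4 < (-a) ^ 4 :=
      pow_lt_pow_left₀ (by linarith) (by linarith) (by norm_num)
    have ea : (-a) ^ 4 = a ^ 4 := by ring
    have eb : (-b) ^ 4 = b ^ 4 := by ring
    linarith
  · intro Y hY
    obtain ⟨y, rfl⟩ : ∃ y, Y = -y := ⟨-Y, by ring⟩
    have hy : 0 < y := by linarith
    have : 0 < y ^ 5 / 60 + y ^ 4 / 12 + y ^ 3 / 6 := by positivity
    nlinarith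
  · intro Y hY
    obtain ⟨y, rfl⟩ : ∃ y, Y = -y := ⟨-Y, by ring⟩
    have hy : 0 < y := by linarith
    have : 0 < y ^ 3 / 6 := by positivity
    nlinarith
  · intro lam hl Y hY
    obtain ⟨y, rfl⟩ : ∃ y, Y = -y := ⟨-Y, by ring⟩
    have hy : 0 < y := by linarith
    have : 0 < y ^ 5 / 120 + y ^ 4 / 24 + (1 + 2 * lam) * y ^ 3 / 12 := by positivity
    nlinarith
  · intro lam hl
    refine ⟨?_, ?_⟩
    · intro Y hY
      obtain ⟨y, rfl⟩ : ∃ y, Y = -y := ⟨-Y, by ring⟩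
      have hy : 0 < y := by linarith
      obtain ⟨s, hs, hsm⟩ : ∃ s : ℝ, 0 ≤ s ∧ s ^ 2 = -(1 + 2 * lam) :=
        ⟨Real.sqrt (-(1 + 2 * lam)), Real.sqrt_nonneg _, Real.sq_sqrt (by linarith)⟩
      have hp : |1 + 2 * lam| ^ ((5 : ℝ) / 2) = s ^ 5 := by
        rw [abs_of_nonpos hl, ← hsm, ← Real.rpow_natCast s 2, ← Real.rpow_mul hs,
          ← Real.rpow_natCast s 5]
        norm_num
      have h3 : (3 : ℝ) ≤ (3 : ℝ) ^ ((3 : ℝ) / 2) := by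
        have := Real.rpow_le_rpow_of_exponent_le (x := 3) (y := 1) (z := 3 / 2)
          (by norm_num) (by norm_num)
        simpa using this
      rw [hp]
      have hK1 := le_max_right (s ^ 5) 1
      have hK2 := le_max_left (s ^ 5) 1
      set K := max (s ^ 5) 1
      have hK3 : 3 * K ≤ (3 : ℝ) ^ ((3 : ℝ) / 2) * K :=
        mul_le_mul_of_nonneg_right h3 (by linarith)
      have hb := aux_bound y s hy hs
      have h4 : 0 < y ^ 4 := by positivity
      have hlam : 2 * lam = -1 - s ^ 2 := by linarith
      rw [hlam]
      have e : (-(-y) ^ 5 / 60 + (-y) ^ 4 / 12 - (-y) ^ 3 / 6) +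
          (-1 - s ^ 2) * (-(-y) ^ 3 / 6) =
          (y ^ 5 - 10 * s ^ 2 * y ^ 3 + 120 * s ^ 5) / 60 + y ^ 4 / 12 - 2 * s ^ 5 := by ring
      rw [e]
      linarith
    · intro Y hY
      have hr := Real.sq_sqrt (show 0 ≤ 25 - 40 * (1 + 2 * lam) by linarith)
      have hr5 : 5 ≤ Real.sqrt (25 - 40 * (1 + 2 * lam)) :=
        Real.le_sqrt_of_sq_le (by linarith)
      set r := Real.sqrt (25 - 40 * (1 + 2 * lam))
      obtain ⟨y, rfl⟩ : ∃ y, Y = -y := ⟨-Y, by ring⟩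
      have hy : 0 ≤ y := by linarith
      have hq : 0 ≤ y ^ 2 + 5 * y + 10 * (1 + 2 * lam) := by nlinarith
      have : 0 ≤ y ^ 3 * (y ^ 2 + 5 * y + 10 * (1 + 2 * lam)) / 60 := by positivity
      nlinarith
end

section
/- Fix a ∈ ℝ, ξ* ∈ ℝ and ξ** ∈ (ξ*, +∞]. Let H : (ξ*, ξ**) → ℝ be a three times continuously differentiable function with H(ξ) > 0 and H'''(ξ) = 1/H(ξ)³ − (ξ² + a) for all ξ ∈ (ξ*, ξ**). If liminf_{ξ→ξ*⁺} H(ξ) = 0, then lim_{ξ→ξ*⁺} H(ξ) = 0. -/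
open Filter Set

/-- `(H, H1, H2)` is a positive C³ solution of `H''' = 1/H³ - (ξ² + a)` on the set `s`. -/
noncomputable def SolH (a : ℝ) (s : Set ℝ) (H H1 H2 : ℝ → ℝ) : Prop :=
  ∀ ξ ∈ s, 0 < H ξ ∧
    HasDerivWithinAt H (H1 ξ) s ξ ∧
    HasDerivWithinAt H1 (H2 ξ) s ξ ∧
    HasDerivWithinAt H2 (1 / (H ξ) ^ 3 - (ξ ^ 2 + a)) s ξ

theorem aux_mono (s b : ℝ) (hb : s < b) (f g : ℝ → ℝ)
    (hf : ∀ x ∈ Ioo s b, HasDerivAt f (g x) x)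
    (hg : MonotoneOn g (Ioo s b) ∨ AntitoneOn g (Ioo s b)) :
    ∃ c, s < c ∧ c ≤ b ∧ (MonotoneOn f (Ioo s c) ∨ AntitoneOn f (Ioo s c)) := by
  have key : ∃ c, s < c ∧ c ≤ b ∧ ((∀ x ∈ Ioo s c, 0 ≤ g x) ∨ (∀ x ∈ Ioo s c, g x ≤ 0)) := by
    rcases hg with hg | hg
    · by_cases h : ∀ x ∈ Ioo s b, 0 ≤ g x
      · exact ⟨b, hb, le_rfl, Or.inl h⟩
      · push Not at h
        obtain ⟨c, hc, hgc⟩ := h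
        refine ⟨c, hc.1, hc.2.le, Or.inr fun x hx => ?_⟩
        exact (hg ⟨hx.1, hx.2.trans hc.2⟩ hc hx.2.le).trans hgc.le
    · by_cases h : ∀ x ∈ Ioo s b, g x ≤ 0
      · exact ⟨b, hb, le_rfl, Or.inr h⟩
      · push Not at h
        obtain ⟨c, hc, hgc⟩ := h
        refine ⟨c, hc.1, hc.2.le, Or.inl fun x hx => ?_⟩
        exact hgc.le.trans (hg ⟨hx.1, hx.2.trans hc.2⟩ hc hx.2.le)
  obtain ⟨c, h1, h2, h3⟩ := key
  have hd : ∀ x ∈ Ioo s c, HasDerivAt f (g x) x := fun x hx => hf x ⟨hx.1, hx.2.trans_le h2⟩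
  refine ⟨c, h1, h2, h3.imp (fun h => ?_) (fun h => ?_)⟩
  · refine monotoneOn_of_deriv_nonneg (convex_Ioo s c)
      (fun x hx => (hd x hx).continuousAt.continuousWithinAt)
      (fun x hx => ?_) (fun x hx => ?_)
    · rw [interior_Ioo] at hx; exact (hd x hx).differentiableAt.differentiableWithinAt
    · rw [interior_Ioo] at hx; rw [(hd x hx).deriv]; exact h x hx
  · refine antitoneOn_of_deriv_nonpos (convex_Ioo s c)
      (fun x hx => (hd x hx).continuousAt.continuousWithinAt)
      (fun x hx => ?_) (fun x hx => ?_)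
    · rw [interior_Ioo] at hx; exact (hd x hx).differentiableAt.differentiableWithinAt
    · rw [interior_Ioo] at hx; rw [(hd x hx).deriv]; exact h x hx

/-- if `liminf H = 0` at the left endpoint `ξ*` of the domain, then in fact
`H → 0` as `ξ → ξ*⁺`. -/
theorem liminf_zero_implies_tendsto_zero (a ξs : ℝ) (ξe : EReal) (hlt : (ξs : EReal) < ξe)
    (H H1 H2 : ℝ → ℝ)
    (hsol : SolH a {ξ : ℝ | ξs < ξ ∧ (ξ : EReal) < ξe} H H1 H2)
    (hliminf : Filter.liminf (fun ξ : ℝ => ((H ξ : ℝ) : EReal))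
      (nhdsWithin ξs (Set.Ioi ξs)) = 0) :
    Tendsto H (nhdsWithin ξs (Set.Ioi ξs)) (nhds 0) := by
  obtain ⟨b, hsb, hb1, hbe⟩ : ∃ b : ℝ, ξs < b ∧ b ≤ ξs + 1 ∧ (b : EReal) < ξe := by
    obtain ⟨q, h1, h2⟩ := EReal.lt_iff_exists_real_btwn.1 hlt
    have h1' : ξs < q := by exact_mod_cast h1
    refine ⟨min q (ξs + 1), lt_min h1' (by linarith), min_le_right _ _, ?_⟩
    exact lt_of_le_of_lt (by exact_mod_cast min_le_left _ _) h2
  have hmem : ∀ x ∈ Ioo ξs b, {ξ : ℝ | ξs < ξ ∧ (ξ : EReal) < ξe} ∈ nhds x := by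
    intro x hx
    filter_upwards [Ioo_mem_nhds hx.1 hx.2] with y hy
    exact ⟨hy.1, lt_trans (by exact_mod_cast hy.2) hbe⟩
  have hin : ∀ x ∈ Ioo ξs b, x ∈ {ξ : ℝ | ξs < ξ ∧ (ξ : EReal) < ξe} :=
    fun x hx => mem_of_mem_nhds (hmem x hx)
  set M : ℝ := (|ξs| + 1) ^ 2 + |a| with hM
  have hM0 : 0 ≤ M := by positivity
  have hMb : ∀ x ∈ Ioo ξs b, x ^ 2 + a ≤ M := by
    intro x hx
    have h1 : |x| ≤ |ξs| + 1 := by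
      rw [abs_le]
      have := neg_abs_le ξs
      have := le_abs_self ξs
      exact ⟨by linarith [hx.1], by linarith [hx.2]⟩
    have h2 : x ^ 2 ≤ (|ξs| + 1) ^ 2 := by
      rw [← sq_abs x]; gcongr
    linarith [le_abs_self a]
  have hid : ∀ x : ℝ, HasDerivAt (fun y : ℝ => y - ξs) 1 x := fun x =>
    (hasDerivAt_id x).sub_const ξs
  have hG : ∀ x ∈ Ioo ξs b, HasDerivAt (fun y => H y + M * (y - ξs) ^ 3 / 6)
      (H1 x + M * (x - ξs) ^ 2 / 2) x := by
    intro x hx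
    have h := (hsol x (hin x hx)).2.1.hasDerivAt (hmem x hx)
    refine (h.add ((((hid x).pow 3).const_mul M).div_const 6)).congr_deriv ?_
    push_cast; ring
  have hG1 : ∀ x ∈ Ioo ξs b, HasDerivAt (fun y => H1 y + M * (y - ξs) ^ 2 / 2)
      (H2 x + M * (x - ξs)) x := by
    intro x hx
    have h := (hsol x (hin x hx)).2.2.1.hasDerivAt (hmem x hx)
    refine (h.add ((((hid x).pow 2).const_mul M).div_const 2)).congr_deriv ?_
    push_cast; ring
  have hG2 : ∀ x ∈ Ioo ξs b, HasDerivAt (fun y => H2 y + M * (y - ξs))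
      (1 / (H x) ^ 3 - (x ^ 2 + a) + M) x := by
    intro x hx
    have h := (hsol x (hin x hx)).2.2.2.hasDerivAt (hmem x hx)
    refine (h.add ((hid x).const_mul M)).congr_deriv ?_
    ring
  have hmon2 : MonotoneOn (fun y => H2 y + M * (y - ξs)) (Ioo ξs b) := by
    refine monotoneOn_of_deriv_nonneg (convex_Ioo ξs b)
      (fun x hx => (hG2 x hx).continuousAt.continuousWithinAt)
      (fun x hx => ?_) (fun x hx => ?_)
    · rw [interior_Ioo] at hx; exact (hG2 x hx).differentiableAt.differentiableWithinAt
    · rw [interior_Ioo] at hx; rw [(hG2 x hx).deriv]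
      have h0 := (hsol x (hin x hx)).1
      have : 0 ≤ 1 / (H x) ^ 3 := by positivity
      linarith [hMb x hx]
  obtain ⟨c, hsc, hcb, hc⟩ := aux_mono ξs b hsb _ _ hG1 (Or.inl hmon2)
  obtain ⟨d, hsd, hdc, hd⟩ := aux_mono ξs c hsc _ _
    (fun x hx => hG x ⟨hx.1, hx.2.trans_le hcb⟩) hc
  have hpos : ∀ x ∈ Ioo ξs d, 0 < H x := fun x hx =>
    (hsol x (hin x ⟨hx.1, hx.2.trans_le (hdc.trans hcb)⟩)).1
  have hfreq : ∀ ε : ℝ, 0 < ε → ∃ᶠ x in nhdsWithin ξs (Ioi ξs), H x < ε := by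
    intro ε hε hn
    have h1 : (ε : EReal) ≤ Filter.liminf (fun ξ : ℝ => ((H ξ : ℝ) : EReal))
      (nhdsWithin ξs (Set.Ioi ξs)) := by
      refine Filter.le_liminf_of_le (by isBoundedDefault) ?_
      filter_upwards [hn] with x hx
      exact_mod_cast not_lt.1 hx
    rw [hliminf] at h1
    have h2 : ε ≤ 0 := by exact_mod_cast h1
    linarith
  have hsmall : ∀ ε : ℝ, 0 < ε → ∀ᶠ x in nhdsWithin ξs (Ioi ξs), M * (x - ξs) ^ 3 / 6 < ε := by
    intro ε hε
    have hcont : ContinuousAt (fun x : ℝ => M * (x - ξs) ^ 3 / 6) ξs := by fun_prop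
    refine (hcont.tendsto.mono_left nhdsWithin_le_nhds).eventually_lt_const ?_
    simpa using hε
  have hfG : ∀ ε : ℝ, 0 < ε → ∃ᶠ x in nhdsWithin ξs (Ioi ξs), H x + M * (x - ξs) ^ 3 / 6 < ε := by
    intro ε hε
    refine ((hfreq (ε / 2) (by linarith)).and_eventually (hsmall (ε / 2) (by linarith))).mono ?_
    rintro x ⟨h1, h2⟩
    linarith
  have hev : ∀ ε : ℝ, 0 < ε → ∃ e, ξs < e ∧ e ≤ d ∧
      ∀ x ∈ Ioo ξs e, H x + M * (x - ξs) ^ 3 / 6 ≤ ε := by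
    intro ε hε
    rcases hd with hd | hd
    · obtain ⟨y, h1, h2⟩ := ((hfG ε hε).and_eventually (Ioo_mem_nhdsGT hsd)).exists
      refine ⟨y, h2.1, h2.2.le, fun x hx => ?_⟩
      exact (hd ⟨hx.1, hx.2.trans h2.2⟩ h2 hx.2.le).trans h1.le
    · refine ⟨d, hsd, le_rfl, fun x hx => ?_⟩
      obtain ⟨y, h1, h2⟩ := ((hfG ε hε).and_eventually (Ioo_mem_nhdsGT hx.1)).exists
      exact (hd ⟨h2.1, h2.2.trans hx.2⟩ hx h2.2.le).trans h1.le
  rw [Metric.tendsto_nhds]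
  intro ε hε
  obtain ⟨e, h1, h2, h3⟩ := hev (ε / 2) (by linarith)
  filter_upwards [Ioo_mem_nhdsGT h1] with x hx
  have hp := hpos x ⟨hx.1, hx.2.trans_le h2⟩
  have h4 := h3 x hx
  have h5 : 0 ≤ M * (x - ξs) ^ 3 / 6 := by
    have : 0 ≤ x - ξs := by linarith [hx.1]
    positivity
  rw [Real.dist_eq, sub_zero, abs_of_pos hp]
  linarith
end
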